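/- arXiv:2605.17411 — 14 statements merged into one kernel-verified Lean document; each statement's English description precedes it below -/
import Mathlib

section
/- Let G be a countable commutative group and let u be a free Schur ultrafilter on G. Then every U ∈ u is a Schur subset of G. -/
/-- An ultrafilter is *free* if it contains no finite set. -/
def IsFreeUltrafilter {X : Type*} (u : Ultrafilter X) : Prop :=
  ∀ A ∈ u, ¬ A.Finite

/-- An ultrafilter `u` on an additive semigroup is *Schur* if for each `U ∈ u`
there exist `a, b ∈ U` with `a + b ∈ U`. -/
def IsSchurUltrafilter {S : Type*} [Add S] (u : Ultrafilter S) : Prop :=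
  ∀ U ∈ u, ∃ a ∈ U, ∃ b ∈ U, a + b ∈ U

/-- A subset `A` of a commutative group `G` is *Schur* if for every `r, k : ℕ` there
is a finite subset `X ⊆ A` such that for every `r`-coloring there exist `a ∈ X` and a
`k`-element subset `B ⊆ X` with `a + B ⊆ X` such that the coloring is constant on
`{a} ∪ B ∪ (a + B)`. -/
def IsSchurSet {G : Type*} [AddCommGroup G] (A : Set G) : Prop :=
  ∀ r k : ℕ, ∃ X : Finset G, (X : Set G) ⊆ A ∧
    ∀ c : G → Fin r, ∃ a ∈ X, ∃ B : Finset G,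
      B ⊆ X ∧ B.card = k ∧ (∀ b ∈ B, a + b ∈ X) ∧
      (∀ b ∈ B, c b = c a) ∧ (∀ b ∈ B, c (a + b) = c a)

theorem aux_compact {G : Type*} {n : ℕ} (C : Finset G → G → Fin n) :
    ∃ c : G → Fin n, ∀ t : Finset G, ∃ s, t ⊆ s ∧ ∀ x ∈ t, C s x = c x := by
  classical
  let w : Ultrafilter (Finset G) := Ultrafilter.of Filter.atTop
  have hw : ∀ x : G, ∃ i : Fin n, ∀ᶠ s in (w : Filter (Finset G)), C s x = i := by
    intro x
    have h : ∀ᶠ s in (w : Filter (Finset G)), ∃ i ∈ (Set.univ : Set (Fin n)), C s x = i :=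
      Filter.Eventually.of_forall fun s => ⟨_, trivial, rfl⟩
    obtain ⟨i, -, hi⟩ := (Ultrafilter.eventually_exists_mem_iff Set.finite_univ).1 h
    exact ⟨i, hi⟩
  choose c hc using hw
  refine ⟨c, fun t => ?_⟩
  have h1 : ∀ᶠ s in (w : Filter (Finset G)), ∀ x ∈ t, C s x = c x :=
    (Filter.eventually_all_finset t).2 fun x _ => hc x
  have h2 : ∀ᶠ s in (w : Filter (Finset G)), t ⊆ s :=
    (Ultrafilter.of_le Filter.atTop) (Filter.eventually_ge_atTop t)
  obtain ⟨s, hs⟩ := (h2.and h1).exists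
  exact ⟨s, hs⟩

theorem aux_finite {G : Type*} {k : ℕ} (N : G → Finset G) (hN : ∀ a, (N a).card ≤ k)
    (s : Finset G) :
    ∃ c : G → Fin (2 * k + 1), ∀ a ∈ s, ∀ b ∈ s, b ∈ N a → a ≠ b → c a ≠ c b := by
  classical
  induction s using Finset.strongInduction with
  | H s ih =>
    rcases s.eq_empty_or_nonempty with rfl | hs
    · exact ⟨fun _ => 0, by simp⟩
    have hv : ∃ v ∈ s, (s.filter fun a => v ∈ N a).card ≤ k := by
      by_contra! hcon
      have h1 : s.card * k < ∑ v ∈ s, (s.filter fun a => v ∈ N a).card := by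
        rw [← smul_eq_mul, ← Finset.sum_const]
        exact Finset.sum_lt_sum_of_nonempty hs hcon
      have h2 : ∑ v ∈ s, (s.filter fun a => v ∈ N a).card
          = ∑ a ∈ s, (s.filter fun v => v ∈ N a).card :=
        Finset.sum_card_bipartiteAbove_eq_sum_card_bipartiteBelow (fun v a => v ∈ N a)
      have h3 : ∑ a ∈ s, (s.filter fun v => v ∈ N a).card ≤ s.card * k := by
        rw [← smul_eq_mul, ← Finset.sum_const]
        refine Finset.sum_le_sum fun a _ => le_trans (Finset.card_le_card ?_) (hN a)
        intro v hv
        exact (Finset.mem_filter.1 hv).2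
      omega
    obtain ⟨v, hvs, hv⟩ := hv
    obtain ⟨c, hc⟩ := ih (s.erase v) (Finset.erase_ssubset hvs)
    let F := (N v ∪ s.filter fun a => v ∈ N a).image c
    have hF : F.card < Fintype.card (Fin (2 * k + 1)) := by
      have h1 : F.card ≤ _ := Finset.card_image_le
      have h2 := Finset.card_union_le (N v) (s.filter fun a => v ∈ N a)
      have h3 := hN v
      rw [Fintype.card_fin]
      omega
    obtain ⟨i, hi⟩ : ∃ i, i ∉ F := by
      by_contra! hcon
      rw [Finset.eq_univ_iff_forall.2 hcon] at hF
      simp at hF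
    have hi' : ∀ x, (x ∈ N v ∨ x ∈ s ∧ v ∈ N x) → c x ≠ i := by
      rintro x hx rfl
      exact hi (Finset.mem_image_of_mem c (by simpa using hx))
    refine ⟨Function.update c v i, fun a ha b hb hab hne => ?_⟩
    by_cases hav : a = v
    · subst hav
      rw [Function.update_self, Function.update_of_ne hne.symm]
      exact (hi' b (Or.inl hab)).symm
    · by_cases hbv : b = v
      · subst hbv
        rw [Function.update_self, Function.update_of_ne hne]
        exact hi' a (Or.inr ⟨ha, hab⟩)
      · rw [Function.update_of_ne hav, Function.update_of_ne hbv]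
        exact hc a (Finset.mem_erase.2 ⟨hav, ha⟩) b (Finset.mem_erase.2 ⟨hbv, hb⟩) hab hne

theorem aux_color {G : Type*} {k : ℕ} (N : G → Finset G) (hN : ∀ a, (N a).card ≤ k) :
    ∃ c : G → Fin (2 * k + 1), ∀ a, ∀ b ∈ N a, a ≠ b → c a ≠ c b := by
  classical
  choose C hC using aux_finite N hN
  obtain ⟨c, hc⟩ := aux_compact C
  refine ⟨c, fun a b hb hne => ?_⟩
  obtain ⟨s, hs, h⟩ := hc {a, b}
  rw [← h a (by simp), ← h b (by simp)]
  exact hC s a (hs (by simp)) b (hs (by simp)) hb hne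

theorem aux_class {G : Type*} (u : Ultrafilter G) {n : ℕ} (c : G → Fin n) :
    ∃ i, {x | c x = i} ∈ u := by
  have h : ∀ᶠ x in (u : Filter G), ∃ i ∈ (Set.univ : Set (Fin n)), c x = i :=
    Filter.Eventually.of_forall fun s => ⟨_, trivial, rfl⟩
  obtain ⟨i, -, hi⟩ := (Ultrafilter.eventually_exists_mem_iff Set.finite_univ).1 h
  exact ⟨i, hi⟩

theorem aux_main {G : Type*} [AddCommGroup G]
    (u : Ultrafilter G) (hfree : IsFreeUltrafilter u) (hschur : IsSchurUltrafilter u)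
    (V : Set G) (hV : V ∈ u) (k : ℕ) :
    ∃ a ∈ V, ∃ B : Finset G, B.card = k ∧ ∀ b ∈ B, b ∈ V ∧ a + b ∈ V := by
  classical
  by_contra! hcon
  have h0 : ({0}ᶜ : Set G) ∈ u := by
    rw [Ultrafilter.compl_mem_iff_notMem]
    exact fun h => hfree _ h (Set.finite_singleton 0)
  have hN : ∀ a, ∃ N : Finset G, N.card ≤ k + 1 ∧
      (a ∈ V → a + a ∈ N ∧ ∀ b ∈ V, a + b ∈ V → b ∈ N) := by
    intro a
    by_cases ha : a ∈ V
    swap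
    · exact ⟨∅, by simp, fun h => absurd h ha⟩
    let S : Set G := {b | b ∈ V ∧ a + b ∈ V}
    have key : ∀ B : Finset G, (B : Set G) ⊆ S → B.card ≠ k := by
      intro B hB hk
      obtain ⟨b, hb, hn⟩ := hcon a ha B hk
      exact hn (hB hb).1 (hB hb).2
    have hfin : S.Finite := by
      by_contra hinf
      obtain ⟨B, hB, hk⟩ := Set.Infinite.exists_subset_card_eq hinf k
      exact key B hB hk
    have hcard : hfin.toFinset.card ≤ k := by
      by_contra! hlt
      obtain ⟨B, hB, hk⟩ := Finset.exists_subset_card_eq hlt.le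
      exact key B (fun x hx => hfin.mem_toFinset.1 (hB hx)) hk
    refine ⟨insert (a + a) hfin.toFinset,
      (Finset.card_insert_le _ _).trans (by omega), fun _ => ⟨by simp, fun b hb hab => ?_⟩⟩
    exact Finset.mem_insert_of_mem (hfin.mem_toFinset.2 ⟨hb, hab⟩)
  choose N hNc hN using hN
  obtain ⟨c, hc⟩ := aux_color N hNc
  obtain ⟨i, hi⟩ := aux_class u c
  obtain ⟨a, ⟨⟨haV, ha0⟩, hai⟩, b, ⟨⟨hbV, hb0⟩, hbi⟩, ⟨habV, hab0⟩, habi⟩ :=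
    hschur _ (Filter.inter_mem (Filter.inter_mem hV h0) hi)
  simp only [Set.mem_setOf_eq] at hai hbi habi
  by_cases hab : a = b
  · subst hab
    refine hc a _ (hN a haV).1 (fun h => ha0 ?_) (hai.trans habi.symm)
    simpa using h
  · exact hc a b ((hN a haV).2 b hbV habV) hab (hai.trans hbi.symm)

/-- Every element of a free Schur ultrafilter on a countable commutative group
is a Schur set. -/
theorem mem_free_schur_ultrafilter_isSchurSet {G : Type*} [AddCommGroup G] [Countable G]
    (u : Ultrafilter G) (hfree : IsFreeUltrafilter u) (hschur : IsSchurUltrafilter u) :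
    ∀ U ∈ u, IsSchurSet U := by
  classical
  intro U hU r k
  by_contra hcon
  have h : ∀ s : Finset G, ∃ c : G → Fin r, ¬ ∃ a ∈ s.filter (· ∈ U), ∃ B : Finset G,
      B ⊆ s.filter (· ∈ U) ∧ B.card = k ∧ (∀ b ∈ B, a + b ∈ s.filter (· ∈ U)) ∧
      (∀ b ∈ B, c b = c a) ∧ (∀ b ∈ B, c (a + b) = c a) := by
    intro s
    by_contra hs
    push Not at hs
    exact hcon ⟨s.filter (· ∈ U), fun x hx => (Finset.mem_filter.1 hx).2, hs⟩
  choose C hC using h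
  obtain ⟨c, hc⟩ := aux_compact C
  obtain ⟨i, hi⟩ := aux_class u c
  obtain ⟨a, ⟨haU, hai⟩, B, hBk, hB⟩ :=
    aux_main u hfree hschur _ (Filter.inter_mem hU hi) k
  obtain ⟨s, hts, hs⟩ := hc (insert a (B ∪ B.image (a + ·)))
  have ma : a ∈ insert a (B ∪ B.image (a + ·)) := by simp
  have mb : ∀ b ∈ B, b ∈ insert a (B ∪ B.image (a + ·)) := fun b hb =>
    Finset.mem_insert_of_mem (Finset.mem_union_left _ hb)
  have mab : ∀ b ∈ B, a + b ∈ insert a (B ∪ B.image (a + ·)) := fun b hb =>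
    Finset.mem_insert_of_mem (Finset.mem_union_right _ (Finset.mem_image_of_mem (a + ·) hb))
  refine hC s ⟨a, Finset.mem_filter.2 ⟨hts ma, haU⟩, B, fun b hb => ?_, hBk,
    fun b hb => ?_, fun b hb => ?_, fun b hb => ?_⟩
  · exact Finset.mem_filter.2 ⟨hts (mb b hb), (hB b hb).1.1⟩
  · exact Finset.mem_filter.2 ⟨hts (mab b hb), (hB b hb).2.1⟩
  · rw [hs _ (mb b hb), hs _ ma]
    exact (hB b hb).1.2.trans hai.symm
  · rw [hs _ (mab b hb), hs _ ma]
    exact (hB b hb).2.2.trans hai.symm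
end

section
/- Let G be a commutative group, let A ⊆ G be a Schur subset, and let B ⊆ G be a subset such that A \ B is finite. Then B is a Schur subset of G. -/
/-- If `A` is a Schur subset of a commutative group `G` and `B ⊆ G` satisfies that
`A \ B` is finite, then `B` is a Schur subset of `G`. -/
theorem isSchurSet_of_almost_superset {G : Type*} [AddCommGroup G]
    (A B : Set G) (hA : IsSchurSet A) (hAB : (A \ B).Finite) :
    IsSchurSet B := by
  classical
  intro r k
  -- give each element of `A \ B` its own new color
  let F : Finset G := hAB.toFinset
  have hF : ∀ x, x ∈ F ↔ x ∈ A ∧ x ∉ B := fun x => by simp [F]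
  let e : (Fin r ⊕ F) ≃ Fin (Fintype.card (Fin r ⊕ F)) := Fintype.equivFin _
  obtain ⟨X, hXA, hX⟩ := hA (Fintype.card (Fin r ⊕ F)) (k + 2)
  refine ⟨X \ F, ?_, ?_⟩
  · intro x hx
    have hx' : x ∈ X \ F := hx
    rw [Finset.mem_sdiff, hF] at hx'
    have := hXA hx'.1
    by_contra hb
    exact hx'.2 ⟨this, hb⟩
  intro c
  let d : G → Fin r ⊕ F := fun x => if h : x ∈ F then Sum.inr ⟨x, h⟩ else Sum.inl (c x)
  have d1 : ∀ x y, x ∈ F → d y = d x → y = x := by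
    intro x y hx h
    by_cases hy : y ∈ F <;> simpa [d, hx, hy] using h
  have d2 : ∀ x y, x ∉ F → d y = d x → y ∉ F ∧ c y = c x := by
    intro x y hx h
    by_cases hy : y ∈ F <;> simpa [d, hx, hy] using h
  obtain ⟨a, haX, S, hSX, hcard, hadd, hc1, hc2⟩ := hX (fun x => e (d x))
  have hc1' : ∀ b ∈ S, d b = d a := fun b hb => e.injective (hc1 b hb)
  have hc2' : ∀ b ∈ S, d (a + b) = d a := fun b hb => e.injective (hc2 b hb)
  have haF : a ∉ F := by
    intro ha
    have hsub : S ⊆ {a} := fun b hb => Finset.mem_singleton.2 (d1 a b ha (hc1' b hb))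
    have := Finset.card_le_card hsub
    rw [Finset.card_singleton] at this
    omega
  obtain ⟨T, hTS, hT⟩ := Finset.exists_subset_card_eq (show k ≤ S.card by omega)
  refine ⟨a, Finset.mem_sdiff.2 ⟨haX, haF⟩, T, ?_, hT, ?_, ?_, ?_⟩
  · intro b hb
    exact Finset.mem_sdiff.2 ⟨hSX (hTS hb), (d2 a b haF (hc1' b (hTS hb))).1⟩
  · intro b hb
    exact Finset.mem_sdiff.2 ⟨hadd b (hTS hb), (d2 a _ haF (hc2' b (hTS hb))).1⟩
  · intro b hb
    exact (d2 a b haF (hc1' b (hTS hb))).2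
  · intro b hb
    exact (d2 a _ haF (hc2' b (hTS hb))).2
end

section
/- Let G be a countable commutative group and let A ⊆ G be a Schur subset. Then for every partition A = X ⊔ Y into two disjoint sets, either X is a Schur subset of G or Y is a Schur subset of G. -/
/-- If `A` is a Schur subset of a countable commutative group `G` and `A = X ⊔ Y`
is a partition of `A` into two disjoint sets, then `X` is Schur or `Y` is Schur. -/
theorem isSchurSet_partition {G : Type*} [AddCommGroup G] [Countable G]
    (A X Y : Set G) (hA : IsSchurSet A) (hXY : A = X ∪ Y) (hdisj : Disjoint X Y) :
    IsSchurSet X ∨ IsSchurSet Y := by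
  classical
  by_contra hcon
  rw [not_or] at hcon
  obtain ⟨hX, hY⟩ := hcon
  unfold IsSchurSet at hX hY
  push Not at hX hY
  obtain ⟨r₁, k₁, h₁⟩ := hX
  obtain ⟨r₂, k₂, h₂⟩ := hY
  obtain ⟨Z, hZA, hZ⟩ := hA (r₁ + r₂) (max k₁ k₂)
  obtain ⟨c₁, hc₁⟩ := h₁ (Z.filter (· ∈ X)) (by intro z hz; simp at hz; exact hz.2)
  obtain ⟨c₂, hc₂⟩ := h₂ (Z.filter (· ∈ Y)) (by intro z hz; simp at hz; exact hz.2)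
  let d : G → Fin r₁ ⊕ Fin r₂ := fun g => if g ∈ X then Sum.inl (c₁ g) else Sum.inr (c₂ g)
  obtain ⟨a, ha, B, hBZ, hBk, haB, hB1, hB2⟩ := hZ (fun g => finSumFinEquiv (d g))
  have hB1' : ∀ b ∈ B, d b = d a := fun b hb => finSumFinEquiv.injective (hB1 b hb)
  have hB2' : ∀ b ∈ B, d (a + b) = d a := fun b hb => finSumFinEquiv.injective (hB2 b hb)
  by_cases haX : a ∈ X
  · have key : ∀ g, d g = d a → g ∈ X ∧ c₁ g = c₁ a := by
      intro g hg
      by_cases hgX : g ∈ X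
      · simp only [d, hgX, haX, if_true, Sum.inl.injEq] at hg
        exact ⟨hgX, hg⟩
      · simp [d, hgX, haX] at hg
    obtain ⟨B', hB', hcard⟩ := Finset.exists_subset_card_eq (hBk ▸ le_max_left k₁ k₂)
    obtain ⟨b, hb, hne⟩ := hc₁ a (Finset.mem_filter.2 ⟨ha, haX⟩) B'
      (fun b hb => Finset.mem_filter.2 ⟨hBZ (hB' hb), (key b (hB1' b (hB' hb))).1⟩) hcard
      (fun b hb => Finset.mem_filter.2 ⟨haB b (hB' hb), (key _ (hB2' b (hB' hb))).1⟩)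
      (fun b hb => (key b (hB1' b (hB' hb))).2)
    exact hne (key _ (hB2' b (hB' hb))).2
  · have hmem : ∀ g ∈ Z, g ∉ X → g ∈ Y := by
      intro g hg hgX
      have h := hZA hg
      rw [hXY] at h
      exact h.resolve_left hgX
    have key : ∀ g, d g = d a → g ∉ X ∧ c₂ g = c₂ a := by
      intro g hg
      by_cases hgX : g ∈ X
      · simp [d, hgX, haX] at hg
      · simp only [d, hgX, haX, if_false, Sum.inr.injEq] at hg
        exact ⟨hgX, hg⟩
    obtain ⟨B', hB', hcard⟩ := Finset.exists_subset_card_eq (hBk ▸ le_max_right k₁ k₂)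
    obtain ⟨b, hb, hne⟩ := hc₂ a (Finset.mem_filter.2 ⟨ha, hmem a ha haX⟩) B'
      (fun b hb => Finset.mem_filter.2 ⟨hBZ (hB' hb),
        hmem _ (hBZ (hB' hb)) (key b (hB1' b (hB' hb))).1⟩) hcard
      (fun b hb => Finset.mem_filter.2 ⟨haB b (hB' hb),
        hmem _ (haB b (hB' hb)) (key _ (hB2' b (hB' hb))).1⟩)
      (fun b hb => (key b (hB1' b (hB' hb))).2)
    exact hne (key _ (hB2' b (hB' hb))).2
end

section
/- Let G be a countable commutative group. A subset A ⊆ G belongs to some free Schur ultrafilter on G if and only if A is a Schur subset of G. -/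
open Classical in
/-- Finite version: a finite digraph with out-degrees at most `d` is `2d+1`-colorable. -/
theorem schur_finite_coloring {G : Type*} (d : ℕ) (N : G → Finset G)
    (hd : ∀ a, (N a).card ≤ d) (hN : ∀ a, a ∉ N a) :
    ∀ (n : ℕ) (S : Finset G), S.card = n →
      ∃ c : G → Fin (2 * d + 1), ∀ a ∈ S, ∀ b ∈ S, b ∈ N a → c a ≠ c b := by
  intro n
  induction n with
  | zero =>
    intro S hS
    rw [Finset.card_eq_zero] at hS
    subst hS
    exact ⟨fun _ => 0, by simp⟩
  | succ n ih =>
    intro S hS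
    have hne : S.Nonempty := by
      rw [← Finset.card_pos]; omega
    obtain ⟨v, hv, hvd⟩ : ∃ v ∈ S, (S.filter (fun a => v ∈ N a)).card ≤ d := by
      apply Finset.exists_le_of_sum_le hne
      have h := Finset.sum_card_bipartiteAbove_eq_sum_card_bipartiteBelow
        (s := S) (t := S) (fun a b => b ∈ N a)
      simp only [Finset.bipartiteAbove, Finset.bipartiteBelow] at h
      rw [← h]
      apply Finset.sum_le_sum
      intro i hi
      refine le_trans (Finset.card_le_card ?_) (hd i)
      intro x hx
      exact (Finset.mem_filter.mp hx).2
    obtain ⟨c, hc⟩ := ih (S.erase v) (by rw [Finset.card_erase_of_mem hv]; omega)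
    obtain ⟨x, hx⟩ : ∃ x, x ∉ ((N v) ∪ (S.filter (fun a => v ∈ N a))).image c := by
      by_contra! hcon
      have h1 : ((N v) ∪ (S.filter (fun a => v ∈ N a))).image c = Finset.univ := by
        ext y; simp only [Finset.mem_univ, iff_true]; exact hcon y
      have h2 := Finset.card_image_le (s := (N v) ∪ (S.filter (fun a => v ∈ N a))) (f := c)
      rw [h1, Finset.card_univ, Fintype.card_fin] at h2
      have h3 := Finset.card_union_le (N v) (S.filter (fun a => v ∈ N a))
      have h4 := hd v
      omega
    simp only [Finset.mem_image, Finset.mem_union, Finset.mem_filter, not_exists, not_and] at hx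
    refine ⟨Function.update c v x, ?_⟩
    intro a ha b hb hab
    by_cases hav : a = v
    · subst hav
      have hba : b ≠ a := fun h => hN a (h ▸ hab)
      rw [Function.update_self, Function.update_of_ne hba]
      exact fun h => hx b (Or.inl hab) h.symm
    · by_cases hbv : b = v
      · subst hbv
        rw [Function.update_self, Function.update_of_ne hav]
        exact fun h => hx a (Or.inr ⟨ha, hab⟩) h
      · rw [Function.update_of_ne hav, Function.update_of_ne hbv]
        exact hc a (Finset.mem_erase.2 ⟨hav, ha⟩) b (Finset.mem_erase.2 ⟨hbv, hb⟩) hab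

theorem schur_coloring {G : Type*} (d : ℕ) (N : G → Finset G)
    (hd : ∀ a, (N a).card ≤ d) (hN : ∀ a, a ∉ N a) :
    ∃ c : G → Fin (2 * d + 1), ∀ a b, b ∈ N a → c a ≠ c b := by
  classical
  choose g hg using fun S : Finset G => schur_finite_coloring d N hd hN S.card S rfl
  obtain ⟨c, hc⟩ := Finset.rado_selection g
  refine ⟨c, fun a b hab => ?_⟩
  obtain ⟨t, ht, h⟩ := hc {a, b}
  rw [h a (by simp), h b (by simp)]
  exact hg t a (ht (by simp)) b (ht (by simp)) hab

theorem schur_color_mem {G : Type*} (u : Ultrafilter G) {r : ℕ} (c : G → Fin r) :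
    ∃ i, {x | c x = i} ∈ u := by
  have := (Ultrafilter.eventually_exists_iff (f := u) (P := fun i x => c x = i)).1
    (Filter.Eventually.of_forall fun x => ⟨c x, rfl⟩)
  exact this

/-- Every member of a free Schur ultrafilter contains `a`, `B`, `a + B` with `B` large. -/
theorem schur_mem_large {G : Type*} [AddCommGroup G] (u : Ultrafilter G)
    (hf : IsFreeUltrafilter u) (hs : IsSchurUltrafilter u) (U : Set G) (hU : U ∈ u) (k : ℕ) :
    ∃ a ∈ U, ∃ B : Finset G, B.card = k ∧ ∀ b ∈ B, b ∈ U ∧ a + b ∈ U := by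
  classical
  by_contra! hcon
  have hfin : ∀ a ∈ U, ∃ F : Finset G, F.card ≤ k ∧ ∀ b, b ∈ U → a + b ∈ U → b ∈ F := by
    intro a ha
    have hfin : {b | b ∈ U ∧ a + b ∈ U}.Finite := by
      by_contra hinf
      obtain ⟨B, hB, hBk⟩ := Set.Infinite.exists_subset_card_eq hinf k
      obtain ⟨b, hb, h⟩ := hcon a ha B hBk
      exact h (hB hb).1 (hB hb).2
    refine ⟨hfin.toFinset, ?_, fun b h1 h2 => by simpa using ⟨h1, h2⟩⟩
    by_contra! hlt
    obtain ⟨B, hB, hBk⟩ := Finset.exists_subset_card_eq hlt.le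
    obtain ⟨b, hb, h⟩ := hcon a ha B hBk
    have := hB hb
    simp only [Set.Finite.mem_toFinset, Set.mem_ofPred_eq] at this
    exact h this.1 this.2
  have hfin' : ∀ a, ∃ F : Finset G, F.card ≤ k ∧
      (a ∈ U → ∀ b, b ∈ U → a + b ∈ U → b ∈ F) := by
    intro a
    by_cases ha : a ∈ U
    · obtain ⟨F, h1, h2⟩ := hfin a ha
      exact ⟨F, h1, fun _ => h2⟩
    · exact ⟨∅, by simp, fun h => absurd h ha⟩
  choose F hF1 hF2 using hfin'
  obtain ⟨c, hc⟩ := schur_coloring (k + 1) (fun a => (insert (a + a) (F a)).erase a)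
    (fun a => (Finset.card_erase_le).trans ((Finset.card_insert_le _ _).trans
      (Nat.succ_le_succ (hF1 a)))) (fun a => by simp)
  obtain ⟨i, hi⟩ := schur_color_mem u c
  have h0 : ({0}ᶜ : Set G) ∈ u :=
    Ultrafilter.compl_mem_iff_notMem.2 fun h => hf _ h (Set.finite_singleton 0)
  obtain ⟨a, ⟨⟨haU, hac⟩, ha0⟩, b, ⟨⟨hbU, hbc⟩, hb0⟩, ⟨habU, habc⟩, hab0⟩ :=
    hs _ (Filter.inter_mem (Filter.inter_mem hU hi) h0)
  simp only [Set.mem_ofPred_eq] at hac hbc habc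
  by_cases hab : b = a
  · subst hab
    refine hc b (b + b) ?_ (hac.trans habc.symm)
    rw [Finset.mem_erase]
    refine ⟨?_, by simp⟩
    intro h
    exact ha0 (by simpa using h)
  · refine hc a b ?_ (hac.trans hbc.symm)
    rw [Finset.mem_erase]
    exact ⟨hab, Finset.mem_insert_of_mem (hF2 a haU b hbU habU)⟩

theorem schur_forward {G : Type*} [AddCommGroup G] (A : Set G) (u : Ultrafilter G)
    (hf : IsFreeUltrafilter u) (hs : IsSchurUltrafilter u) (hA : A ∈ u) : IsSchurSet A := by
  classical
  intro r k
  by_contra! hcon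
  choose g hg using fun S : Finset G => hcon (S.filter (· ∈ A))
    (fun x hx => (Finset.mem_filter.1 hx).2)
  obtain ⟨c, hc⟩ := Finset.rado_selection g
  obtain ⟨i, hi⟩ := schur_color_mem u c
  obtain ⟨a, ⟨haA, hac⟩, B, hBk, hB⟩ := schur_mem_large u hf hs _ (Filter.inter_mem hA hi) k
  obtain ⟨t, ht, h⟩ := hc (insert a (B ∪ B.image (a + ·)))
  have hat : g t a = i := by rw [← h a (by simp)]; exact hac
  have hb : ∀ b ∈ B, b ∈ t ∧ g t b = i := fun b hb =>
    ⟨ht (by simp [hb]), by rw [← h b (by simp [hb])]; exact (hB b hb).1.2⟩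
  have hab : ∀ b ∈ B, a + b ∈ t ∧ g t (a + b) = i := fun b hb =>
    ⟨ht (by simp [hb]), by rw [← h (a + b) (by simp [hb])]; exact (hB b hb).2.2⟩
  obtain ⟨b, hbB, hne⟩ := hg t a (Finset.mem_filter.2 ⟨ht (by simp), haA⟩) B
    (fun b h => Finset.mem_filter.2 ⟨(hb b h).1, (hB b h).1.1⟩) hBk
    (fun b h => Finset.mem_filter.2 ⟨(hab b h).1, (hB b h).2.1⟩)
    (fun b h => by rw [(hb b h).2, hat])
  exact hne (by rw [(hab b hbB).2, hat])

/-- Sets containing `a`, `B`, `a + B` with `B` of size `k`. -/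
def SchurLargeAux {G : Type*} [AddCommGroup G] (U : Set G) (k : ℕ) : Prop :=
  ∃ a ∈ U, ∃ B : Finset G, B.card = k ∧ ∀ b ∈ B, b ∈ U ∧ a + b ∈ U

theorem schur_backward {G : Type*} [AddCommGroup G] (A : Set G) (h : IsSchurSet A) :
    ∃ u : Ultrafilter G, IsFreeUltrafilter u ∧ IsSchurUltrafilter u ∧ A ∈ u := by
  classical
  obtain ⟨u, hu⟩ := Ultrafilter.exists_ultrafilter_of_finite_inter_nonempty
    {W : Set G | ∃ k, ¬ SchurLargeAux (A \ W) k} (by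
      intro T hT
      by_contra hemp
      have hx : ∀ x : G, ∃ W : T, x ∉ W.1 := by
        intro x
        by_contra! hx
        exact hemp ⟨x, fun W hW => hx ⟨W, hW⟩⟩
      choose f hfx using hx
      have hT' : ∀ W : Set G, W ∈ T → ∃ k, ¬ SchurLargeAux (A \ W) k := fun W hW => hT hW
      choose! κ hκ using hT'
      obtain ⟨X, hXA, hX⟩ := h T.card (T.sup κ)
      obtain ⟨a, ha, B, hBX, hBk, hab, hcb, hcab⟩ := hX (fun x => T.equivFin (f x))
      simp only [EmbeddingLike.apply_eq_iff_eq] at hcb hcab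
      have hle : κ (f a) ≤ B.card := hBk ▸ Finset.le_sup (f a).2
      obtain ⟨B', hB', hBk'⟩ := Finset.exists_subset_card_eq hle
      refine hκ _ (f a).2 ⟨a, ⟨hXA ha, hfx a⟩, B', hBk', fun b hb => ?_⟩
      have hb := hB' hb
      refine ⟨⟨hXA (hBX hb), ?_⟩, ⟨hXA (hab b hb), ?_⟩⟩
      · rw [← hcb b hb]; exact hfx b
      · rw [← hcab b hb]; exact hfx (a + b))
  have key : ∀ U ∈ u, ∀ k, SchurLargeAux U k := by
    intro U hU k
    by_contra hk
    have : Uᶜ ∈ u := hu ⟨k, by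
      rintro ⟨a, ha, B, hB, hb⟩
      refine hk ⟨a, not_not.1 ha.2, B, hB, fun b h => ⟨not_not.1 (hb b h).1.2, not_not.1 (hb b h).2.2⟩⟩⟩
    exact Ultrafilter.compl_mem_iff_notMem.1 this hU
  refine ⟨u, ?_, ?_, ?_⟩
  · intro U hU hfin
    obtain ⟨a, ha, B, hB, hb⟩ := key U hU (hfin.toFinset.card + 1)
    have := Finset.card_le_card (s := B) (t := hfin.toFinset) (fun b h => by
      simpa using (hb b h).1)
    omega
  · intro U hU
    obtain ⟨a, ha, B, hB, hb⟩ := key U hU 1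
    obtain ⟨b, rfl⟩ := Finset.card_eq_one.1 hB
    exact ⟨a, ha, b, (hb b (by simp)).1, (hb b (by simp)).2⟩
  · exact hu ⟨0, by
      rintro ⟨a, ha, _⟩
      exact ha.2 ha.1⟩

/-- A subset `A` of a countable commutative group `G` belongs to some free Schur
ultrafilter on `G` if and only if `A` is a Schur set. -/
theorem mem_free_schur_ultrafilter_iff_isSchurSet {G : Type*} [AddCommGroup G] [Countable G]
    (A : Set G) :
    (∃ u : Ultrafilter G, IsFreeUltrafilter u ∧ IsSchurUltrafilter u ∧ A ∈ u) ↔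
      IsSchurSet A := by
  exact ⟨fun ⟨u, h1, h2, h3⟩ => schur_forward A u h1 h2 h3, schur_backward A⟩
end

section
/- Let U be a Schur subset of ℤ consisting of positive integers. Then there exists a Schur subset W ⊆ U of ℤ such that for every a ∈ W the set {b ∈ W : a + b ∈ W} is finite. -/
lemma schur_multiples (U : Set ℤ) (hU : IsSchurSet U) (M : ℕ) [NeZero M] (r k : ℕ) :
    ∃ X : Finset ℤ, (∀ x ∈ X, x ∈ U ∧ (M : ℤ) ∣ x) ∧
    ∀ c : ℤ → Fin r, ∃ a ∈ X, ∃ B : Finset ℤ,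
      B ⊆ X ∧ B.card = k ∧ (∀ b ∈ B, a + b ∈ X) ∧
      (∀ b ∈ B, c b = c a) ∧ (∀ b ∈ B, c (a + b) = c a) := by
  classical
  obtain ⟨X, hXU, hX⟩ := hU (Fintype.card (Fin r × ZMod M)) (k + 1)
  refine ⟨X.filter (fun x => (M : ℤ) ∣ x), ?_, ?_⟩
  · intro x hx
    rw [Finset.mem_filter] at hx
    exact ⟨hXU hx.1, hx.2⟩
  · intro c
    obtain ⟨a, ha, B, hBX, hcard, hab, h1, h2⟩ :=
      hX (fun x => Fintype.equivFin (Fin r × ZMod M) (c x, (x : ZMod M)))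
    simp only [EmbeddingLike.apply_eq_iff_eq, Prod.mk.injEq] at h1 h2
    have hb0 : ∀ b ∈ B, ((b : ℤ) : ZMod M) = 0 := by
      intro b hb
      have := (h2 b hb).2
      push_cast at this
      simpa using this
    have hne : B.Nonempty := Finset.card_pos.mp (by omega)
    obtain ⟨b0, hb0B⟩ := hne
    have ha0 : ((a : ℤ) : ZMod M) = 0 := by
      rw [← (h1 b0 hb0B).2]; exact hb0 b0 hb0B
    have hda : (M : ℤ) ∣ a := (ZMod.intCast_zmod_eq_zero_iff_dvd a M).mp ha0
    have hdb : ∀ b ∈ B, (M : ℤ) ∣ b := fun b hb =>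
      (ZMod.intCast_zmod_eq_zero_iff_dvd b M).mp (hb0 b hb)
    obtain ⟨B', hB', hc'⟩ := Finset.exists_subset_card_eq (show k ≤ B.card by omega)
    refine ⟨a, Finset.mem_filter.mpr ⟨ha, hda⟩, B', ?_, hc', ?_, ?_, ?_⟩
    · intro b hb
      exact Finset.mem_filter.mpr ⟨hBX (hB' hb), hdb b (hB' hb)⟩
    · intro b hb
      exact Finset.mem_filter.mpr ⟨hab b (hB' hb), dvd_add hda (hdb b (hB' hb))⟩
    · intro b hb
      exact (h1 b (hB' hb)).1
    · intro b hb
      exact (h2 b (hB' hb)).1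

/-- A modulus more than twice every element of `T`. -/
def bigMod (T : Finset ℤ) : ℕ := 2 * (∑ t ∈ T, t.natAbs) + 1

lemma lt_bigMod {T : Finset ℤ} {t : ℤ} (ht : t ∈ T) : 2 * t < (bigMod T : ℤ) := by
  have : t.natAbs ≤ ∑ t ∈ T, t.natAbs :=
    Finset.single_le_sum (f := fun t : ℤ => t.natAbs) (fun _ _ => Nat.zero_le _) ht
  unfold bigMod
  omega

instance (T : Finset ℤ) : NeZero (bigMod T) := ⟨by unfold bigMod; omega⟩

/-- The union of the first `n` blocks. -/
def stages (F : Finset ℤ → ℕ → Finset ℤ) : ℕ → Finset ℤ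
  | 0 => ∅
  | n + 1 => stages F n ∪ F (stages F n) n

/-- If `U` is a Schur subset of `ℤ` consisting of positive integers, then there
exists a Schur subset `W ⊆ U` such that for every `a ∈ W` the set
`{b ∈ W | a + b ∈ W}` is finite. -/
theorem exists_schur_subset_with_finite_translates (U : Set ℤ)
    (hpos : ∀ n ∈ U, 0 < n) (hU : IsSchurSet U) :
    ∃ W ⊆ U, IsSchurSet W ∧ ∀ a ∈ W, {b ∈ W | a + b ∈ W}.Finite := by
  classical
  choose F hF1 hF2 using fun (T : Finset ℤ) (n : ℕ) =>
    schur_multiples U hU (bigMod T) n.unpair.1 n.unpair.2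
  have hmono : Monotone (stages F) :=
    monotone_nat_of_le_succ (fun n => by
      show stages F n ⊆ stages F n ∪ F (stages F n) n
      exact Finset.subset_union_left)
  have hmem : ∀ m n, m < n → ∀ x ∈ F (stages F m) m, x ∈ stages F n := by
    intro m n hmn x hx
    have h : x ∈ stages F (m + 1) := Finset.mem_union_right _ hx
    exact hmono (Nat.succ_le_of_lt hmn) h
  refine ⟨{x | ∃ n, x ∈ F (stages F n) n}, ?_, ?_, ?_⟩
  · rintro x ⟨n, hx⟩
    exact (hF1 _ _ x hx).1
  · intro r k
    refine ⟨F (stages F (Nat.pair r k)) (Nat.pair r k), fun x hx => ⟨_, hx⟩, ?_⟩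
    have := hF2 (stages F (Nat.pair r k)) (Nat.pair r k)
    rw [Nat.unpair_pair] at this
    exact this
  · rintro a ⟨m, ha⟩
    refine (stages F (m + 1)).finite_toSet.subset ?_
    rintro b ⟨⟨n, hb⟩, ⟨l, hab⟩⟩
    by_contra hbm
    have hmn : m < n := by
      by_contra h
      exact hbm (hmem n (m + 1) (by omega) b hb)
    have ha0 := hpos a (hF1 _ _ a ha).1
    obtain ⟨hb0, hbd⟩ := hF1 _ _ b hb
    obtain ⟨-, habd⟩ := hF1 _ _ _ hab
    replace hb0 := hpos b hb0
    have haM := lt_bigMod (hmem m n hmn a ha)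
    rcases lt_trichotomy l n with h | h | h
    · have h1 := lt_bigMod (hmem l n h _ hab)
      have h2 := Int.le_of_dvd hb0 hbd
      omega
    · subst h
      have h2 := Int.le_of_dvd ha0 ((dvd_add_left hbd).mp habd)
      omega
    · have h1 := lt_bigMod (hmem m l (by omega) a ha)
      have h2 := lt_bigMod (hmem n l h b hb)
      have h3 := Int.le_of_dvd (by omega) habd
      omega
end

section
/- The set Sch^fin(ℤ) of all free Schur ultrafilters on ℤ which are not infinitary Schur is an open dense subset of the space Sch(ℤ) of all free Schur ultrafilters on ℤ, where the space of all ultrafilters on ℤ carries the Stone topology and Sch(ℤ) carries the subspace topology. -/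
/-- An ultrafilter `u` on an additive semigroup is *infinitary Schur* if for each
`U ∈ u` there exist `a ∈ U` and an infinite subset `B ⊆ U` with `a + B ⊆ U`. -/
def IsInfSchurUltrafilter {S : Type*} [Add S] (u : Ultrafilter S) : Prop :=
  ∀ U ∈ u, ∃ a ∈ U, ∃ B ⊆ U, B.Infinite ∧ ∀ b ∈ B, a + b ∈ U

/-- The space `Sch(ℤ)` of free Schur ultrafilters on `ℤ`, with the subspace topology
inherited from the Stone topology on the space of all ultrafilters on `ℤ`. -/
abbrev SchZ : Type := {u : Ultrafilter ℤ // IsFreeUltrafilter u ∧ IsSchurUltrafilter u}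

/-- A finite set `G` such that every colouring with `n+1` colours has a monochromatic Schur triple. -/
def SchurRich (n : ℕ) (G : Set ℤ) : Prop :=
  ∀ c : ℤ → Fin (n + 1), ∃ a ∈ G, ∃ b ∈ G, a + b ∈ G ∧ c a = c b ∧ c (a + b) = c b

theorem schurRich_of_mem (u : Ultrafilter ℤ) (hu : IsSchurUltrafilter u) (U : Set ℤ) (hU : U ∈ u)
    (n : ℕ) : SchurRich n U := by
  intro c
  obtain ⟨i, hi⟩ : ∃ i, c ⁻¹' {i} ∈ u := by
    have h : (⋃ i ∈ (Set.univ : Set (Fin (n+1))), c ⁻¹' {i}) ∈ u := by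
      have e : (⋃ i ∈ (Set.univ : Set (Fin (n+1))), c ⁻¹' {i}) = Set.univ := by
        ext x; simp
      rw [e]; exact Filter.univ_mem
    rw [Ultrafilter.finite_biUnion_mem_iff Set.finite_univ] at h
    obtain ⟨i, _, hi⟩ := h
    exact ⟨i, hi⟩
  obtain ⟨a, ha, b, hb, hab⟩ := hu _ (Filter.inter_mem hU hi)
  refine ⟨a, ha.1, b, hb.1, hab.1, ?_, ?_⟩
  · exact ha.2.trans hb.2.symm
  · exact hab.2.trans hb.2.symm

theorem schurRich_finite (n : ℕ) (U : Set ℤ) (h : SchurRich n U) :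
    ∃ G : Finset ℤ, (G : Set ℤ) ⊆ U ∧ SchurRich n G := by
  let ι := {p : ℤ × ℤ // p.1 ∈ U ∧ p.2 ∈ U ∧ p.1 + p.2 ∈ U}
  let O : ι → Set (ℤ → Fin (n+1)) := fun p =>
    {c | c p.1.1 = c p.1.2 ∧ c (p.1.1 + p.1.2) = c p.1.2}
  have hO : ∀ p, IsOpen (O p) := by
    intro p
    have h1 : ∀ x y : ℤ, IsOpen {c : ℤ → Fin (n+1) | c x = c y} := by
      intro x y
      have hc : Continuous (fun c : ℤ → Fin (n+1) => (c x, c y)) := by fun_prop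
      exact (isOpen_discrete {q : Fin (n+1) × Fin (n+1) | q.1 = q.2}).preimage hc
    exact (h1 _ _).inter (h1 _ _)
  obtain ⟨t, ht⟩ := isCompact_univ.elim_finite_subcover O hO (by
    intro c _
    obtain ⟨a, ha, b, hb, hab, h1, h2⟩ := h c
    exact Set.mem_iUnion.2 ⟨⟨(a, b), ha, hb, hab⟩, h1, h2⟩)
  classical
  refine ⟨t.biUnion fun p => {p.1.1, p.1.2, p.1.1 + p.1.2}, ?_, ?_⟩
  · intro x hx
    simp only [Finset.coe_biUnion, Set.mem_iUnion] at hx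
    obtain ⟨p, _, hx⟩ := hx
    simp only [Finset.coe_insert, Finset.coe_singleton, Set.mem_insert_iff,
      Set.mem_singleton_iff] at hx
    rcases hx with rfl | rfl | rfl
    exacts [p.2.1, p.2.2.1, p.2.2.2]
  · intro c
    have hc := ht (Set.mem_univ c)
    simp only [Set.mem_iUnion] at hc
    obtain ⟨p, hp, h1, h2⟩ := hc
    have hm : ∀ x ∈ ({p.1.1, p.1.2, p.1.1 + p.1.2} : Finset ℤ),
        x ∈ ((t.biUnion fun p => {p.1.1, p.1.2, p.1.1 + p.1.2} : Finset ℤ) : Set ℤ) := by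
      intro x hx
      exact Finset.mem_coe.2 (Finset.mem_biUnion.2 ⟨p, hp, hx⟩)
    exact ⟨p.1.1, hm _ (by simp), p.1.2, hm _ (by simp), hm _ (by simp), h1, h2⟩

theorem avoid_diff (u : Ultrafilter ℤ) (a : ℤ) (ha : a ≠ 0) :
    ∃ W ∈ u, ∀ b ∈ W, a + b ∉ W := by
  have key : ∀ b : ℤ, (a + b) / a = b / a + 1 := by
    intro b
    have := Int.add_mul_ediv_right b 1 ha
    rw [one_mul] at this
    rw [add_comm, this]
  rcases u.mem_or_compl_mem {x | Even (x / a)} with h | h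
  · refine ⟨_, h, ?_⟩
    intro b hb hab
    simp only [Set.mem_ofPred_eq, key] at hb hab
    rw [Int.even_add_one] at hab
    exact hab hb
  · refine ⟨_, h, ?_⟩
    intro b hb hab
    simp only [Set.mem_compl_iff, Set.mem_ofPred_eq, key] at hb hab
    rw [Int.even_add_one] at hab
    exact hab hb

theorem step (u : Ultrafilter ℤ) (hf : IsFreeUltrafilter u) (hu : IsSchurUltrafilter u)
    (U : Set ℤ) (hU : U ∈ u) (n : ℕ) (H : Finset ℤ) :
    ∃ G : Finset ℤ, (G : Set ℤ) ⊆ U ∧ SchurRich n G ∧ 0 ∉ G ∧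
      (∀ a ∈ H, a ≠ 0 → ∀ b ∈ G, a + b ∉ G) ∧ (∀ a ∈ H, ∀ b ∈ H, a + b ∉ G) ∧
      (∀ a ∈ H, ∀ b ∈ G, a + b ∉ H) := by
  classical
  have hW : ∀ a : ℤ, ∃ W ∈ u, a ≠ 0 → ∀ b ∈ W, a + b ∉ W := by
    intro a
    by_cases ha : a = 0
    · exact ⟨Set.univ, Filter.univ_mem, fun h => absurd ha h⟩
    · obtain ⟨W, h1, h2⟩ := avoid_diff u a ha
      exact ⟨W, h1, fun _ => h2⟩
  choose W hWu hW using hW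
  let F : Finset ℤ := {0} ∪ (Finset.image₂ (· + ·) H H ∪ Finset.image₂ (· - ·) H H)
  have hF : (F : Set ℤ)ᶜ ∈ u := by
    rw [Ultrafilter.compl_mem_iff_notMem]
    exact fun h => hf _ h F.finite_toSet
  have hI : (⋂ a ∈ H, W a) ∈ u :=
    (Filter.biInter_finset_mem H).2 fun a _ => hWu a
  obtain ⟨G, hG, hR⟩ := schurRich_finite n _
    (schurRich_of_mem u hu _ (Filter.inter_mem hU (Filter.inter_mem hF hI)) n)
  have hGF : ∀ x ∈ G, x ∉ F := fun x hx => (hG hx).2.1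
  have hGW : ∀ x ∈ G, ∀ a ∈ H, x ∈ W a := fun x hx => by simpa using (hG hx).2.2
  refine ⟨G, fun x hx => (hG hx).1, hR, ?_, ?_, ?_, ?_⟩
  · intro h
    exact hGF 0 h (by simp [F])
  · intro a ha h0 b hb hab
    exact hW a h0 b (hGW b hb a ha) (hGW _ hab a ha)
  · intro a ha b hb hab
    refine hGF _ hab ?_
    exact Finset.mem_union_right _ (Finset.mem_union_left _ (Finset.mem_image₂_of_mem ha hb))
  · intro a ha b hb hab
    refine hGF _ hb ?_
    refine Finset.mem_union_right _ (Finset.mem_union_right _ ?_)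
    have := Finset.mem_image₂_of_mem (f := fun x y : ℤ => x - y) hab ha
    simpa using this

theorem exists_thin (u : Ultrafilter ℤ) (hf : IsFreeUltrafilter u) (hu : IsSchurUltrafilter u)
    (U : Set ℤ) (hU : U ∈ u) :
    ∃ V ⊆ U, (∀ n, SchurRich n V) ∧ 0 ∉ V ∧ ∀ a ∈ V, {b | b ∈ V ∧ a + b ∈ V}.Finite := by
  classical
  choose g hgU hgR hg0 h1 h2 h3 using step u hf hu U hU
  obtain ⟨H, Hz, Hs⟩ : ∃ H : ℕ → Finset ℤ, H 0 = ∅ ∧ ∀ n, H (n+1) = H n ∪ g n (H n) :=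
    ⟨fun n => Nat.rec ∅ (fun n K => K ∪ g n K) n, rfl, fun n => rfl⟩
  have Hmono : Monotone H := monotone_nat_of_le_succ fun n => by
    rw [Hs]; exact Finset.subset_union_left
  have HU : ∀ n, ∀ x ∈ H n, x ∈ U ∧ x ≠ 0 := by
    intro n
    induction n with
    | zero => intro x hx; simp [Hz] at hx
    | succ n ih =>
      intro x hx
      rw [Hs, Finset.mem_union] at hx
      rcases hx with hx | hx
      · exact ih x hx
      · exact ⟨hgU _ _ hx, fun h => hg0 n (H n) (h ▸ hx)⟩
  refine ⟨⋃ n : ℕ, {x | x ∈ H n}, ?_, ?_, ?_, ?_⟩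
  · intro x hx
    obtain ⟨n, hn⟩ := Set.mem_iUnion.1 hx
    exact (HU n x hn).1
  · intro n c
    obtain ⟨a, ha, b, hb, hab, hc⟩ := hgR n (H n) c
    have hm : ∀ x ∈ (g n (H n) : Set ℤ), x ∈ ⋃ n : ℕ, {x | x ∈ H n} := fun x hx =>
      Set.mem_iUnion.2 ⟨n+1, by rw [Hs]; exact Finset.mem_union_right _ hx⟩
    exact ⟨a, hm a ha, b, hm b hb, hm _ hab, hc⟩
  · intro h
    obtain ⟨n, hn⟩ := Set.mem_iUnion.1 h
    exact (HU n 0 hn).2 rfl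
  · intro a ha
    obtain ⟨m, hm⟩ := Set.mem_iUnion.1 ha
    have ha0 := (HU m a hm).2
    have key : ∀ n, m ≤ n → ∀ b ∈ H n, a + b ∈ H n → b ∈ H m := by
      intro n hn
      induction n, hn using Nat.le_induction with
      | base => intro b hb _; exact hb
      | succ n hn ih =>
        intro b hb hab
        have han : a ∈ H n := Hmono hn hm
        rw [Hs, Finset.mem_union] at hb hab
        rcases hb with hb | hb <;> rcases hab with hab | hab
        · exact ih b hb hab
        · exact absurd hab (h2 n _ a han b hb)
        · exact absurd hab (h3 n _ a han b hb)
        · exact absurd hab (h1 n _ a han ha0 b hb)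
    refine (H m).finite_toSet.subset ?_
    rintro b ⟨hb, hab⟩
    obtain ⟨i, hi⟩ := Set.mem_iUnion.1 hb
    obtain ⟨j, hj⟩ := Set.mem_iUnion.1 hab
    exact key (max m (max i j)) (le_max_left _ _) b
      (Hmono ((le_max_left i j).trans (le_max_right _ _)) hi)
      (Hmono ((le_max_right i j).trans (le_max_right _ _)) hj)

theorem exists_schur_ultrafilter (V : Set ℤ) (hV : ∀ n, SchurRich n V) (h0 : 0 ∉ V) :
    ∃ v : Ultrafilter ℤ, V ∈ v ∧ IsFreeUltrafilter v ∧ IsSchurUltrafilter v := by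
  classical
  let S : Set (Set ℤ) := {A | A = V ∨ ¬ ∃ a ∈ Aᶜ, ∃ b ∈ Aᶜ, a + b ∈ Aᶜ}
  obtain ⟨v, hv⟩ := Ultrafilter.exists_ultrafilter_of_finite_inter_nonempty S (by
    intro T hT
    by_contra hne
    have hx : ∀ x : ℤ, ∃ A : T, x ∉ A.1 := by
      intro x
      by_contra hx
      push Not at hx
      exact hne ⟨x, fun A hA => hx ⟨A, hA⟩⟩
    choose f hf using hx
    let c : ℤ → Fin (T.card + 1) := fun x => (T.equivFin (f x)).castSucc
    obtain ⟨a, ha, b, hb, hab, hc1, hc2⟩ := hV _ c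
    have e1 : f a = f b := T.equivFin.injective (Fin.castSucc_injective _ hc1)
    have e2 : f (a + b) = f b := T.equivFin.injective (Fin.castSucc_injective _ hc2)
    rcases hT (f b).2 with h | h
    · exact hf b (h ▸ hb)
    · exact h ⟨a, e1 ▸ hf a, b, hf b, e2 ▸ hf (a + b)⟩)
  have hVv : V ∈ v := hv (Or.inl rfl)
  have hsch : IsSchurUltrafilter v := by
    intro A hA
    by_contra h
    have : Aᶜ ∈ v := hv (Or.inr (by rwa [compl_compl]))
    exact (Ultrafilter.compl_mem_iff_notMem.1 this) hA
  refine ⟨v, hVv, ?_, hsch⟩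
  intro A hA hfin
  obtain ⟨x, hx, hvx⟩ := Ultrafilter.eq_pure_of_finite_mem hfin hA
  subst hvx
  obtain ⟨a, ha, b, hb, hab⟩ := hsch {x} (by simp)
  have hxV : x ∈ V := by simpa using hVv
  simp only [Set.mem_singleton_iff] at ha hb hab
  have : x = 0 := by omega
  exact h0 (this ▸ hxV)

/-- The set `Sch^fin(ℤ)` of free Schur ultrafilters on `ℤ` which are not infinitary
Schur is an open dense subset of `Sch(ℤ)`. -/
theorem schFin_isOpen_and_dense :
    IsOpen {v : SchZ | ¬ IsInfSchurUltrafilter v.1} ∧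
      Dense {v : SchZ | ¬ IsInfSchurUltrafilter v.1} := by
  constructor
  · rw [isOpen_iff_forall_mem_open]
    intro v hv
    simp only [Set.mem_ofPred_eq, IsInfSchurUltrafilter, not_forall] at hv
    obtain ⟨U, hU, h⟩ := hv
    refine ⟨{w : SchZ | U ∈ w.1}, ?_, ?_, hU⟩
    · intro w hw hinf
      exact h (hinf U hw)
    · exact (ultrafilter_isOpen_basic U).preimage continuous_subtype_val
  · rw [dense_iff_inter_open]
    rintro O hO ⟨u, hu⟩
    obtain ⟨O', hO', rfl⟩ := isOpen_induced_iff.1 hO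
    obtain ⟨_, ⟨U, rfl⟩, hU, hsub⟩ :=
      ultrafilterBasis_is_basis.exists_subset_of_mem_open hu hO'
    obtain ⟨V, hVU, hR, h0, hfin⟩ := exists_thin u.1 u.2.1 u.2.2 U hU
    obtain ⟨v, hv, hfree, hsch⟩ := exists_schur_ultrafilter V hR h0
    refine ⟨⟨v, hfree, hsch⟩, hsub (Filter.mem_of_superset hv hVU), ?_⟩
    intro hinf
    obtain ⟨a, ha, B, hB, hBi, hab⟩ := hinf V hv
    exact hBi ((hfin a ha).subset fun b hb => ⟨hB hb, hab b hb⟩)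
end

section
/- There exists a free Schur ultrafilter on ℤ that is not an infinitary Schur ultrafilter. -/
attribute [local instance] Ultrafilter.add Ultrafilter.addSemigroup

open Filter Nat in
theorem exists_lim_ultrafilter : ∃ u : Ultrafilter ℤ, IsSchurUltrafilter u ∧
    {x : ℤ | ∃ k n : ℕ, 1 ≤ k ∧ k ≤ n ∧ x = ((k * n ! : ℕ) : ℤ)} ∈ u := by
  obtain ⟨q, hq⟩ : ∃ q : Ultrafilter ℕ+, q + q = q :=
    exists_idempotent_of_compact_t2_of_continuous_add_left Ultrafilter.continuous_add_left
  let u : Ultrafilter ℤ := q.bind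
    (fun k : ℕ+ => (hyperfilter ℕ).map (fun n : ℕ => (((k : ℕ) * n ! : ℕ) : ℤ)))
  have hu : ∀ A : Set ℤ, A ∈ u ↔
      ∀ᶠ k : ℕ+ in (q : Filter ℕ+), ∀ᶠ n in (hyperfilter ℕ : Filter ℕ),
        (((k : ℕ) * n ! : ℕ) : ℤ) ∈ A := fun A => Iff.rfl
  refine ⟨u, ?_, ?_⟩
  · intro U hU
    have h1 := (hu U).1 hU
    have h2 := h1
    rw [← hq, Ultrafilter.eventually_add] at h2
    obtain ⟨a, ha, ha2⟩ := (h1.and h2).exists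
    obtain ⟨b, hb, hb2⟩ := (h1.and ha2).exists
    obtain ⟨n, hn1, hn2, hn3⟩ := (ha.and (hb.and hb2)).exists
    refine ⟨_, hn1, _, hn2, ?_⟩
    convert hn3 using 1
    push_cast
    ring
  · rw [hu]
    refine Eventually.of_forall fun k => ?_
    have : ∀ᶠ n in (hyperfilter ℕ : Filter ℕ), (k : ℕ) ≤ n :=
      Nat.hyperfilter_le_atTop (eventually_ge_atTop _)
    filter_upwards [this] with n hn
    exact ⟨k, n, k.pos, hn, rfl⟩

open Nat in
theorem bounded_shift {k m l n j r : ℕ} (hm : k ≤ m) (hk : 1 ≤ k)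
    (hl : 1 ≤ l) (hjr : j ≤ r)
    (h : k * m ! + l * n ! = j * r !) : n ≤ m := by
  by_contra! hmn
  have h0 : 0 < k * m ! := Nat.mul_pos hk (Nat.factorial_pos m)
  have ha : k * m ! < n ! := by
    calc k * m ! < (m + 1) * m ! := Nat.mul_lt_mul_of_pos_right (by omega) (Nat.factorial_pos m)
      _ = (m + 1)! := rfl
      _ ≤ n ! := Nat.factorial_le hmn
  by_cases hr : n ≤ r
  · obtain ⟨c, hc⟩ := (Nat.factorial_dvd_factorial hr).mul_left j
    have : n ! ∣ k * m ! :=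
      (Nat.dvd_add_left (Dvd.intro_left l rfl)).1 (h ▸ (Nat.factorial_dvd_factorial hr).mul_left j)
    exact absurd (Nat.le_of_dvd h0 this) (by omega)
  · push Not at hr
    have h2 : j * r ! < n ! := by
      calc j * r ! < (r + 1) * r ! := Nat.mul_lt_mul_of_pos_right (by omega) (Nat.factorial_pos r)
        _ = (r + 1)! := rfl
        _ ≤ n ! := Nat.factorial_le hr
    have h3 : n ! ≤ l * n ! := Nat.le_mul_of_pos_left _ hl
    omega

/-- There exists a free Schur ultrafilter on `ℤ` that is not infinitary Schur. -/
theorem exists_free_schur_not_infSchur :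
    ∃ u : Ultrafilter ℤ, IsFreeUltrafilter u ∧ IsSchurUltrafilter u ∧
      ¬ IsInfSchurUltrafilter u := by
  obtain ⟨u, hs, hU⟩ := exists_lim_ultrafilter
  refine ⟨u, ?_, hs, ?_⟩
  · intro A hA hfin
    obtain ⟨x, -, rfl⟩ := Ultrafilter.eq_pure_of_finite_mem hfin hA
    obtain ⟨k, n, hk, -, hx⟩ := Ultrafilter.mem_pure.1 hU
    obtain ⟨a, ha, b, hb, hab⟩ := hs {x} (Ultrafilter.mem_pure.2 rfl)
    simp only [Set.mem_singleton_iff] at ha hb hab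
    have : 0 < k * n.factorial := Nat.mul_pos hk (Nat.factorial_pos n)
    omega
  · intro h
    obtain ⟨a, ⟨k, m, hk, hkm, rfl⟩, B, hB, hinf, hBU⟩ := h _ hU
    apply hinf
    refine (Set.finite_Icc (0 : ℤ) ((m * m.factorial : ℕ) : ℤ)).subset fun b hb => ?_
    have hb2 := hBU b hb
    obtain ⟨l, n, hl, hln, rfl⟩ := hB hb
    obtain ⟨j, r, hj, hjr, he⟩ := hb2
    have hnm : n ≤ m := bounded_shift hkm hk hl hjr (by exact_mod_cast he)
    refine ⟨Int.natCast_nonneg _, ?_⟩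
    exact_mod_cast Nat.mul_le_mul (hln.trans hnm) (Nat.factorial_le hnm)
end

section
/- Assume the Continuum Hypothesis. Then the set Sch^p(ℤ) of all free Schur ultrafilters on ℤ which are P-points is dense in the space Sch(ℤ) of all free Schur ultrafilters on ℤ, where the space of all ultrafilters on ℤ carries the Stone topology and Sch(ℤ) carries the subspace topology. -/
/-- An ultrafilter `u` on a countable set is a *P-point* if for every countable
family `{U n : n ∈ ℕ} ⊆ u` there exists `U ∈ u` with `U \ U n` finite for all `n`. -/
def IsPPoint {X : Type*} (u : Ultrafilter X) : Prop :=
  ∀ f : ℕ → Set X, (∀ n, f n ∈ u) → ∃ U ∈ u, ∀ n, (U \ f n).Finite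

/-- `U` has a colouring by `k + 1` colours without monochromatic Schur triples. -/
def GoodCol (k : ℕ) (U : Set ℤ) : Prop :=
  ∃ c : ℤ → Fin (k + 1), ∀ a ∈ U, ∀ b ∈ U, a + b ∈ U → ¬ (c a = c b ∧ c a = c (a + b))

/-- Sets that belong to the ideal generated by `{0}` and the sum-free sets. -/
def SmallSet (U : Set ℤ) : Prop := ∃ k, GoodCol k (U \ {0})

theorem GoodCol.mono {k : ℕ} {U V : Set ℤ} (h : GoodCol k U) (hV : V ⊆ U) : GoodCol k V := by
  obtain ⟨c, hc⟩ := h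
  exact ⟨c, fun a ha b hb hab => hc a (hV ha) b (hV hb) (hV hab)⟩

theorem SmallSet.mono {U V : Set ℤ} (h : SmallSet U) (hV : V ⊆ U) : SmallSet V := by
  obtain ⟨k, hk⟩ := h
  exact ⟨k, hk.mono (Set.sdiff_subset_sdiff_left hV)⟩

theorem goodCol_of_finite {κ : Type} [Finite κ] {U : Set ℤ} (c : ℤ → κ)
    (hc : ∀ a ∈ U, ∀ b ∈ U, a + b ∈ U → ¬ (c a = c b ∧ c a = c (a + b))) :
    ∃ k, GoodCol k U := by
  obtain ⟨n, ⟨e⟩⟩ := Finite.exists_equiv_fin κ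
  refine ⟨n, fun x => (e (c x)).castSucc, fun a ha b hb hab h => hc a ha b hb hab ?_⟩
  simpa using h

theorem SmallSet.union {U V : Set ℤ} (hU : SmallSet U) (hV : SmallSet V) : SmallSet (U ∪ V) := by
  classical
  obtain ⟨k, c, hc⟩ := hU
  obtain ⟨l, d, hd⟩ := hV
  refine goodCol_of_finite (κ := Fin (k + 1) ⊕ Fin (l + 1))
    (fun x => if x ∈ U then Sum.inl (c x) else Sum.inr (d x)) ?_
  intro a ha b hb hab h
  have h1 := hc a
  have h2 := hd a
  by_cases haU : a ∈ U <;> by_cases hbU : b ∈ U <;> by_cases habU : a + b ∈ U <;>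
    simp [haU, hbU, habU] at h ha hb hab
  · exact hc a ⟨haU, ha⟩ b ⟨hbU, hb⟩ ⟨habU, hab⟩ h
  · exact hd a ⟨ha.1, ha.2⟩ b ⟨hb.1, hb.2⟩ ⟨hab.1, hab.2⟩ h

theorem smallSet_of_finite {U : Set ℤ} (h : U.Finite) : SmallSet U := by
  induction U, h using Set.Finite.induction_on with
  | empty => exact ⟨0, fun _ => 0, by simp⟩
  | @insert x s _ _ ih =>
    rw [Set.insert_eq]
    refine SmallSet.union ⟨0, fun _ => 0, ?_⟩ ih
    rintro a ⟨ha, ha0⟩ b ⟨hb, _⟩ ⟨hab, _⟩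
    simp only [Set.mem_singleton_iff] at *
    omega

theorem exists_finite_not_goodCol {k : ℕ} {U : Set ℤ} (h : ¬ GoodCol k U) :
    ∃ F ⊆ U, F.Finite ∧ ¬ GoodCol k F := by
  by_contra! hcon
  apply h
  have h1 : ∀ m : ℕ, GoodCol k (U ∩ Set.Icc (-(m : ℤ)) m) := fun m =>
    hcon _ Set.inter_subset_left ((Set.finite_Icc _ _).subset Set.inter_subset_right)
  choose c hc using h1
  let w : Ultrafilter ℕ := Filter.hyperfilter ℕ
  have h2 : ∀ x, ∃ i, ∀ᶠ m in (w : Filter ℕ), c m x = i := by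
    intro x
    obtain ⟨i, hi⟩ := (w.map (fun m => c m x)).eq_pure_of_finite
    refine ⟨i, ?_⟩
    have : ({i} : Set _) ∈ w.map (fun m => c m x) := by rw [hi]; simp
    exact this
  choose d hd using h2
  have h3 : ∀ x : ℤ, ∀ᶠ m : ℕ in (w : Filter ℕ), x ∈ Set.Icc (-(m : ℤ)) m := by
    intro x
    apply Nat.hyperfilter_le_atTop
    filter_upwards [Filter.eventually_ge_atTop x.natAbs] with m hm
    constructor <;> omega
  refine ⟨d, fun a ha b hb hab hh => ?_⟩
  obtain ⟨m, e1, e2, e3, e4, e5, e6⟩ := ((hd a).and ((hd b).and ((hd (a+b)).and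
    ((h3 a).and ((h3 b).and (h3 (a+b))))))).exists
  refine hc m a ⟨ha, e4⟩ b ⟨hb, e5⟩ ⟨hab, e6⟩ ?_
  rw [e1, e2, e3]
  exact hh

theorem not_smallSet_of_diff {B X : Set ℤ} (hB : ¬ SmallSet B) (h : (B \ X).Finite) :
    ¬ SmallSet X := by
  intro hX
  apply hB
  refine (hX.union (smallSet_of_finite h)).mono ?_
  intro x hx
  by_cases h : x ∈ X
  · exact Or.inl h
  · exact Or.inr ⟨hx, h⟩

theorem finite_diff_trans {A B C : Set ℤ} (h : (A \ B).Finite) (h' : (B \ C).Finite) :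
    (A \ C).Finite := by
  refine (h.union h').subset ?_
  intro x hx
  by_cases h : x ∈ B
  · exact Or.inr ⟨h, hx.2⟩
  · exact Or.inl ⟨hx.1, h⟩

theorem exists_pseudo (f : ℕ → Set ℤ)
    (hf : ∀ n, ∃ B, ¬ SmallSet B ∧ ∀ j ≤ n, (B \ f j).Finite) :
    ∃ X, ¬ SmallSet X ∧ ∀ n, (X \ f n).Finite := by
  have h1 : ∀ n, ¬ SmallSet (⋂ j ∈ Set.Iic n, f j) := by
    intro n
    obtain ⟨B, hB, hBf⟩ := hf n
    refine not_smallSet_of_diff hB ?_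
    refine ((Set.finite_Iic n).biUnion (t := fun j => B \ f j) (fun j hj => hBf j hj)).subset ?_
    rintro x ⟨hx, hx'⟩
    simp only [Set.mem_iInter, not_forall] at hx'
    obtain ⟨j, hj, hxj⟩ := hx'
    exact Set.mem_biUnion hj ⟨hx, hxj⟩
  have h2 : ∀ n, ∃ F ⊆ (⋂ j ∈ Set.Iic n, f j) \ {0}, F.Finite ∧ ¬ GoodCol n F := fun n =>
    exists_finite_not_goodCol fun h => h1 n ⟨n, h⟩
  choose F hF hfin hgood using h2
  refine ⟨⋃ n, F n, ?_, ?_⟩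
  · rintro ⟨k, hk⟩
    exact hgood k (hk.mono fun x hx => ⟨Set.mem_iUnion.2 ⟨k, hx⟩, (hF k hx).2⟩)
  · intro n
    refine ((Set.finite_Iio n).biUnion (t := F) (fun j _ => hfin j)).subset ?_
    rintro x ⟨hx, hx'⟩
    obtain ⟨m, hm⟩ := Set.mem_iUnion.1 hx
    refine Set.mem_biUnion (show m ∈ Set.Iio n from ?_) hm
    by_contra hnm
    exact hx' (Set.mem_iInter₂.1 (hF m hm).1 n (Set.mem_Iic.2 (not_lt.1 hnm)))

theorem not_smallSet_of_mem {u : Ultrafilter ℤ} (hfree : IsFreeUltrafilter u)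
    (hS : IsSchurUltrafilter u) {U : Set ℤ} (hU : U ∈ u) : ¬ SmallSet U := by
  rintro ⟨k, c, hc⟩
  obtain ⟨i, hi⟩ := (u.map c).eq_pure_of_finite
  have h1 : c ⁻¹' {i} ∈ u := by
    have : ({i} : Set _) ∈ u.map c := by rw [hi]; simp
    exact this
  have h0 : ({0} : Set ℤ)ᶜ ∈ u :=
    Ultrafilter.compl_mem_iff_notMem.2 fun h => hfree _ h (Set.finite_singleton _)
  obtain ⟨a, ha, b, hb, hab⟩ := hS _ (Filter.inter_mem (Filter.inter_mem hU h0) h1)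
  refine hc a ha.1 b hb.1 hab.1 ?_
  have e1 := ha.2
  have e2 := hb.2
  have e3 := hab.2
  simp only [Set.mem_preimage, Set.mem_singleton_iff] at e1 e2 e3
  rw [e1, e2, e3]
  exact ⟨rfl, rfl⟩

theorem schur_of_not_small {u : Ultrafilter ℤ} (h : ∀ U ∈ u, ¬ SmallSet U) :
    IsFreeUltrafilter u ∧ IsSchurUltrafilter u := by
  refine ⟨fun A hA hfin => h A hA (smallSet_of_finite hfin), fun U hU => ?_⟩
  by_contra! hcon
  exact h U hU ⟨0, fun _ => 0, fun a ha b hb hab => absurd hab.1 (hcon a ha.1 b hb.1)⟩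

/-- The requirement for the `i`-th step of the tower. -/
def StepSpec {ι : Type} [LT ι] (e : ι → Set ℤ) (A : Set ℤ) (i : ι)
    (h : ∀ j, j < i → Set ℤ) (X : Set ℤ) : Prop :=
  ¬ SmallSet X ∧ X ⊆ A ∧ (X ⊆ e i ∨ X ⊆ (e i)ᶜ) ∧ ∀ j hj, (X \ h j hj).Finite

theorem exists_tower {ι : Type} [LinearOrder ι] [WellFoundedLT ι]
    (hc : ∀ i : ι, (Set.Iio i).Countable) (e : ι → Set ℤ) (A : Set ℤ) (hA : ¬ SmallSet A) :
    ∃ T : ι → Set ℤ, ∀ i, StepSpec e A i (fun j _ => T j) (T i) := by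
  classical
  let G : ∀ i : ι, (∀ j, j < i → Set ℤ) → Set ℤ := fun i h =>
    if H : ∃ X, StepSpec e A i h X then H.choose else ∅
  let T : ι → Set ℤ := wellFounded_lt.fix G
  have hT : ∀ i, T i = G i (fun j _ => T j) := fun i => wellFounded_lt.fix_eq G i
  refine ⟨T, fun i => ?_⟩
  induction i using WellFoundedLT.induction with
  | _ i ih =>
  have key : ∃ X, StepSpec e A i (fun j _ => T j) X := by
    have hC : (insert A (T '' Set.Iio i)).Countable := ((hc i).image T).insert A
    obtain ⟨f, hf⟩ := hC.exists_eq_range (Set.insert_nonempty _ _)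
    have hlarge : ∀ n, ¬ SmallSet (f n) := by
      intro n
      have : f n ∈ insert A (T '' Set.Iio i) := hf ▸ Set.mem_range_self n
      rcases this with h | ⟨j, hj, h⟩
      · rw [h]; exact hA
      · rw [← h]; exact (ih j hj).1
    have hdir : ∀ m n, (f m \ f n).Finite ∨ (f n \ f m).Finite := by
      intro m n
      have hm : f m ∈ insert A (T '' Set.Iio i) := hf ▸ Set.mem_range_self m
      have hn : f n ∈ insert A (T '' Set.Iio i) := hf ▸ Set.mem_range_self n
      rcases hm with hm | ⟨j, hj, hm⟩ <;> rcases hn with hn | ⟨l, hl, hn⟩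
      · simp [hm, hn]
      · right
        rw [hm, ← hn, Set.sdiff_eq_empty.2 (ih l hl).2.1]; exact Set.finite_empty
      · left
        rw [hn, ← hm, Set.sdiff_eq_empty.2 (ih j hj).2.1]; exact Set.finite_empty
      · rw [← hm, ← hn]
        rcases lt_trichotomy j l with h | h | h
        · right; exact (ih l hl).2.2.2 j h
        · simp [h]
        · left; exact (ih j hj).2.2.2 l h
    have hB : ∀ n, ∃ m, ∀ j ≤ n, (f m \ f j).Finite := by
      intro n
      induction n with
      | zero => exact ⟨0, fun j hj => by simp [Nat.le_zero.1 hj]⟩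
      | succ n ihn =>
        obtain ⟨m, hm⟩ := ihn
        rcases hdir m (n + 1) with h | h
        · refine ⟨m, fun j hj => ?_⟩
          rcases Nat.le_succ_iff.1 hj with h' | h'
          · exact hm j h'
          · rw [h']; exact h
        · refine ⟨n + 1, fun j hj => ?_⟩
          rcases Nat.le_succ_iff.1 hj with h' | h'
          · exact finite_diff_trans h (hm j h')
          · simp [h']
    obtain ⟨X, hX, hXf⟩ := exists_pseudo f fun n => by
      obtain ⟨m, hm⟩ := hB n
      exact ⟨f m, hlarge m, hm⟩
    have hXC : ∀ Y ∈ insert A (T '' Set.Iio i), (X \ Y).Finite := by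
      intro Y hY
      rw [hf] at hY
      obtain ⟨n, rfl⟩ := hY
      exact hXf n
    have hX' : ¬ SmallSet (X ∩ A) := by
      refine not_smallSet_of_diff hX ?_
      rw [Set.sdiff_self_inter]
      exact hXC A (Set.mem_insert _ _)
    have hlast : ∀ Y ⊆ X, ∀ j, j < i → (Y \ T j).Finite := fun Y hY j hj =>
      (hXC (T j) (Set.mem_insert_of_mem _ ⟨j, hj, rfl⟩)).subset (Set.sdiff_subset_sdiff_left hY)
    by_cases hs : SmallSet (X ∩ A ∩ e i)
    · refine ⟨X ∩ A ∩ (e i)ᶜ, fun hs' => hX' ((hs.union hs').mono ?_),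
        fun x hx => hx.1.2, Or.inr fun x hx => hx.2, hlast _ fun x hx => hx.1.1⟩
      rw [← Set.inter_union_distrib_left, Set.union_compl_self, Set.inter_univ]
    · exact ⟨X ∩ A ∩ e i, hs, fun x hx => hx.1.2, Or.inl fun x hx => hx.2,
        hlast _ fun x hx => hx.1.1⟩
  have : T i = key.choose := by rw [hT i]; exact dif_pos key
  rw [this]
  exact key.choose_spec

theorem exists_ppoint {ι : Type} [LinearOrder ι] [WellFoundedLT ι] [Uncountable ι]
    (hc : ∀ i : ι, (Set.Iio i).Countable) (e : ι → Set ℤ) (he : Function.Surjective e)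
    (A : Set ℤ) (hA : ¬ SmallSet A) :
    ∃ u : Ultrafilter ℤ, A ∈ u ∧ (IsFreeUltrafilter u ∧ IsSchurUltrafilter u) ∧ IsPPoint u := by
  obtain ⟨T, hT⟩ := exists_tower hc e A hA
  have hle : ∀ {i j}, i ≤ j → (T j \ T i).Finite := by
    intro i j hij
    rcases hij.eq_or_lt with h | h
    · simp [h]
    · exact (hT j).2.2.2 i h
  obtain ⟨i0⟩ : Nonempty ι := inferInstance
  let φ : Filter ℤ :=
    { sets := {X | ∃ i, (T i \ X).Finite}
      univ_sets := ⟨i0, by simp⟩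
      sets_of_superset := by
        rintro X Y ⟨i, hi⟩ hXY
        exact ⟨i, hi.subset (Set.sdiff_subset_sdiff_right hXY)⟩
      inter_sets := by
        rintro X Y ⟨i, hi⟩ ⟨j, hj⟩
        refine ⟨max i j, ?_⟩
        rw [Set.sdiff_inter]
        exact (finite_diff_trans (hle (le_max_left i j)) hi).union
          (finite_diff_trans (hle (le_max_right i j)) hj) }
  have hφ : ∀ X, X ∈ φ ↔ ∃ i, (T i \ X).Finite := fun X => Iff.rfl
  have hφs : ∀ X ∈ φ, ¬ SmallSet X := by
    rintro X ⟨i, hi⟩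
    exact not_smallSet_of_diff (hT i).1 hi
  have hφu : ∀ X, Xᶜ ∉ φ ↔ X ∈ φ := by
    intro X
    constructor
    · intro h
      obtain ⟨i, rfl⟩ := he X
      rcases (hT i).2.2.1 with h' | h'
      · exact ⟨i, by rw [Set.sdiff_eq_empty.2 h']; exact Set.finite_empty⟩
      · exact absurd ⟨i, by rw [Set.sdiff_eq_empty.2 h']; exact Set.finite_empty⟩ h
    · intro h h'
      have := Filter.inter_mem h h'
      rw [Set.inter_compl_self] at this
      exact hφs _ this (smallSet_of_finite Set.finite_empty)
  let u := Ultrafilter.ofComplNotMemIff φ hφu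
  have hu : ∀ X, X ∈ u ↔ ∃ i, (T i \ X).Finite := fun X => Iff.rfl
  refine ⟨u, ⟨i0, ?_⟩, schur_of_not_small hφs, ?_⟩
  · rw [Set.sdiff_eq_empty.2 (hT i0).2.1]; exact Set.finite_empty
  · intro f hf
    choose g hg using fun n => (hu _).1 (hf n)
    obtain ⟨i, hi⟩ : ∃ i, ∀ n, g n ≤ i := by
      by_contra! hcon
      have : (Set.univ : Set ι).Countable := by
        refine (Set.countable_iUnion fun n => hc (g n)).mono fun i _ => ?_
        exact Set.mem_iUnion.2 (hcon i)
      exact not_countable (Set.countable_univ_iff.1 this)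
    exact ⟨T i, ⟨i, by simp⟩, fun n => finite_diff_trans (hle (hi n)) (hg n)⟩

/-- Under CH, the set `Sch^p(ℤ)` of free Schur ultrafilters on `ℤ` which are
P-points is dense in `Sch(ℤ)`. -/
theorem schP_dense_of_CH (hCH : Cardinal.continuum = Cardinal.aleph 1) :
    Dense {v : SchZ | IsPPoint v.1} := by
  intro v
  rw [mem_closure_iff]
  intro o ho hvo
  obtain ⟨O, hO, rfl⟩ := isOpen_induced_iff.1 ho
  obtain ⟨t, ⟨A, rfl⟩, hA, hAO⟩ :=
    ultrafilterBasis_is_basis.exists_subset_of_mem_open (show v.1 ∈ O from hvo) hO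
  have hlarge : ¬ SmallSet A := not_smallSet_of_mem v.2.1 v.2.2 hA
  let ι : Type := (Cardinal.aleph 1).ord.ToType
  have hι : Cardinal.mk ι = Cardinal.aleph 1 := by simp [ι]
  have hcount : ∀ i : ι, (Set.Iio i).Countable := fun i => by
    rw [Cardinal.countable_iff_lt_aleph_one]
    exact Cardinal.mk_Iio_toType_ord_lt i
  have hunc : Uncountable ι := by
    rw [← Cardinal.aleph0_lt_mk_iff, hι]
    exact Cardinal.aleph0_lt_aleph_one
  have heq : Cardinal.mk ι = Cardinal.mk (Set ℤ) := by
    have h0 : Cardinal.continuum.{0} = Cardinal.aleph 1 := by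
      apply Cardinal.lift_injective
      rw [Cardinal.lift_continuum, hCH]
      simp
    rw [hι, ← h0, Cardinal.mk_set]; simp
  obtain ⟨e⟩ := Cardinal.eq.1 heq
  obtain ⟨u, huA, hu, hP⟩ := exists_ppoint hcount e e.surjective A hlarge
  exact ⟨⟨u, hu⟩, hAO huA, hP⟩
end

section
/- Assume the Continuum Hypothesis. Then for every Schur subset A of ℤ there exists a free Schur ultrafilter u on ℤ such that A ∈ u and u is a P-point. In particular, under CH there exists a free Schur ultrafilter on ℤ that is a P-point. -/
/-- `X` witnesses the Schur property for `(r, k)`. -/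
def SchurWit (X : Finset ℤ) (r k : ℕ) : Prop :=
  ∀ c : ℤ → Fin r, ∃ a ∈ X, ∃ B : Finset ℤ,
      B ⊆ X ∧ B.card = k ∧ (∀ b ∈ B, a + b ∈ X) ∧
      (∀ b ∈ B, c b = c a) ∧ (∀ b ∈ B, c (a + b) = c a)

theorem SchurWit.mono {X : Finset ℤ} {r k n l : ℕ} (h : SchurWit X n l) (hr : r ≤ n) (hk : k ≤ l) :
    SchurWit X r k := by
  intro c
  obtain ⟨a, ha, B, hB, hc, h1, h2, h3⟩ := h (fun z => Fin.castLE hr (c z))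
  obtain ⟨B', hB', hc'⟩ := Finset.exists_subset_card_eq (hc.symm ▸ hk : k ≤ B.card)
  refine ⟨a, ha, B', hB'.trans hB, hc', fun b hb => h1 b (hB' hb), fun b hb => ?_, fun b hb => ?_⟩
  · exact Fin.castLE_injective hr (h2 b (hB' hb))
  · exact Fin.castLE_injective hr (h3 b (hB' hb))

theorem schur_mono {A A' : Set ℤ} (h : IsSchurSet A) (hs : A ⊆ A') : IsSchurSet A' := by
  intro r k
  obtain ⟨X, hX, h⟩ := h r k
  exact ⟨X, hX.trans hs, h⟩

theorem schur_not_finite {A : Set ℤ} (h : IsSchurSet A) : ¬ A.Finite := by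
  intro hf
  obtain ⟨X, hX, h⟩ := h 1 (hf.toFinset.card + 1)
  obtain ⟨a, ha, B, hB, hc, -⟩ := h (fun _ => 0)
  have : B ⊆ hf.toFinset := fun b hb => by simpa using hX (hB hb)
  have := Finset.card_le_card this
  omega

theorem schur_union {A A₁ A₂ : Set ℤ} (h : IsSchurSet A) (hA : A ⊆ A₁ ∪ A₂) :
    IsSchurSet A₁ ∨ IsSchurSet A₂ := by
  classical
  by_contra hcon
  rw [not_or] at hcon
  obtain ⟨h1, h2⟩ := hcon
  unfold IsSchurSet at h1 h2
  push Not at h1 h2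
  obtain ⟨r₁, k₁, h1⟩ := h1
  obtain ⟨r₂, k₂, h2⟩ := h2
  obtain ⟨X, hX, hw⟩ := h (r₁ + r₂) (max (max k₁ k₂) 1)
  obtain ⟨c₁, h1⟩ := h1 (X.filter (· ∈ A₁)) (by intro x; simp)
  obtain ⟨c₂, h2⟩ := h2 (X.filter (· ∉ A₁)) (by
    intro x; simp only [Finset.coe_filter, Set.mem_setOf_eq]
    rintro ⟨hx, hx'⟩; exact (hA (hX hx)).resolve_left hx')
  let c : ℤ → Fin (r₁ + r₂) := fun z => if z ∈ A₁ then Fin.castAdd r₂ (c₁ z) else Fin.natAdd r₁ (c₂ z)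
  have hc : ∀ x y, c x = c y → (x ∈ A₁ ∧ y ∈ A₁ ∧ c₁ x = c₁ y) ∨ (x ∉ A₁ ∧ y ∉ A₁ ∧ c₂ x = c₂ y) := by
    intro x y hxy
    simp only [c] at hxy
    split_ifs at hxy with hx hy hy
    · left; exact ⟨hx, hy, by simpa using hxy⟩
    · exfalso
      have := congrArg Fin.val hxy
      simp at this; have := (c₁ x).2; omega
    · exfalso
      have := congrArg Fin.val hxy
      simp at this; have := (c₁ y).2; omega
    · right; exact ⟨hx, hy, by simpa using hxy⟩
  obtain ⟨a, ha, B, hB, hcard, e1, e2, e3⟩ := hw c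
  by_cases haA : a ∈ A₁
  · obtain ⟨B', hB', hc'⟩ := Finset.exists_subset_card_eq (by omega : k₁ ≤ B.card)
    obtain ⟨b, hb, hne⟩ := h1 a (by simp [ha, haA]) B' (by
      intro b hb
      have := hc _ _ (e2 b (hB' hb))
      have := hB (hB' hb)
      simp; tauto) hc' (by
      intro b hb
      have := hc _ _ (e3 b (hB' hb))
      have := e1 b (hB' hb)
      simp; tauto) (by
      intro b hb
      have := hc _ _ (e2 b (hB' hb))
      tauto)
    have := hc _ _ (e3 b (hB' hb))
    tauto
  · obtain ⟨B', hB', hc'⟩ := Finset.exists_subset_card_eq (by omega : k₂ ≤ B.card)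
    obtain ⟨b, hb, hne⟩ := h2 a (by simp [ha, haA]) B' (by
      intro b hb
      have := hc _ _ (e2 b (hB' hb))
      have := hB (hB' hb)
      simp; tauto) hc' (by
      intro b hb
      have := hc _ _ (e3 b (hB' hb))
      have := e1 b (hB' hb)
      simp; tauto) (by
      intro b hb
      have := hc _ _ (e2 b (hB' hb))
      tauto)
    have := hc _ _ (e3 b (hB' hb))
    tauto

theorem schur_ae {A A' : Set ℤ} (h : IsSchurSet A) (hf : (A \ A').Finite) : IsSchurSet A' := by
  rcases schur_union (A₁ := A') (A₂ := A \ A') h (by intro x hx; by_cases x ∈ A' <;> simp_all) with h | h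
  · exact h
  · exact absurd hf (schur_not_finite h)

theorem schur_pseudo {ι : Type*} (A₀ : Set ℤ) (s : Set ι) (hs : s.Countable) (A : ι → Set ℤ)
    (h : ∀ t : Finset ι, (t : Set ι) ⊆ s →
      ∃ S, IsSchurSet S ∧ S ⊆ A₀ ∧ ∀ i ∈ t, (S \ A i).Finite) :
    ∃ S, IsSchurSet S ∧ S ⊆ A₀ ∧ ∀ i ∈ s, (S \ A i).Finite := by
  classical
  rcases s.eq_empty_or_nonempty with rfl | hne
  · obtain ⟨S, h1, h2, -⟩ := h ∅ (by simp)
    exact ⟨S, h1, h2, by simp⟩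
  obtain ⟨f, rfl⟩ := hs.exists_eq_range hne
  have hD : ∀ n : ℕ, IsSchurSet (A₀ ∩ ⋂ m ∈ Finset.range (n + 1), A (f m)) := by
    intro n
    obtain ⟨S, h1, h2, h3⟩ := h ((Finset.range (n + 1)).image f) (by
      intro x; simp only [Finset.coe_image]; rintro ⟨m, -, rfl⟩; exact ⟨m, rfl⟩)
    refine schur_ae h1 (((Finset.range (n + 1)).finite_toSet.biUnion
      (t := fun m => S \ A (f m)) fun m hm => h3 _ (Finset.mem_image_of_mem f hm)).subset ?_)
    rintro x ⟨hx, hx'⟩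
    simp only [Set.mem_inter_iff, h2 hx, true_and, Set.mem_iInter, not_forall] at hx'
    obtain ⟨m, hm, hx'⟩ := hx'
    exact Set.mem_biUnion (x := m) hm ⟨hx, hx'⟩
  choose X hX hw using fun n => hD n n n
  refine ⟨⋃ n, (X n : Set ℤ), ?_, ?_, ?_⟩
  · intro r k
    exact ⟨X (max r k), Set.subset_iUnion (fun n => (X n : Set ℤ)) _,
      SchurWit.mono (hw (max r k)) (le_max_left _ _) (le_max_right _ _)⟩
  · exact Set.iUnion_subset fun n => (hX n).trans Set.inter_subset_left
  · rintro _ ⟨m, rfl⟩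
    refine ((Finset.range m).finite_toSet.biUnion
      (t := fun n => (X n : Set ℤ)) fun n _ => (X n).finite_toSet).subset ?_
    rintro x ⟨hx, hx'⟩
    obtain ⟨n, hn⟩ := Set.mem_iUnion.1 hx
    refine Set.mem_biUnion (x := n) ?_ hn
    by_contra hmn
    simp only [Finset.coe_range, Set.mem_Iio, not_lt] at hmn
    have := (hX n hn).2
    simp only [Set.mem_iInter] at this
    exact hx' (this m (by simp; omega))

theorem FS_unbounded (N : ℕ) (s : Stream' ℕ+) : ∃ m ∈ Hindman.FS s, N < (m : ℕ) := by
  induction N generalizing s with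
  | zero => exact ⟨_, Hindman.FS.head s, s.head.pos⟩
  | succ N ih =>
    obtain ⟨m, hm, h⟩ := ih s.tail
    refine ⟨_, Hindman.FS.cons s m hm, ?_⟩
    have := s.head.pos
    rw [PNat.add_coe]
    omega

theorem FS_infinite (s : Stream' ℕ+) : (Hindman.FS s).Infinite := by
  intro hf
  obtain ⟨N, hN⟩ := (hf.image (fun m : ℕ+ => (m : ℕ))).bddAbove
  obtain ⟨m, hm, h⟩ := FS_unbounded N s
  have := hN ⟨m, hm, rfl⟩
  simp only at this
  omega

theorem schur_univ : IsSchurSet (Set.univ : Set ℤ) := by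
  classical
  intro r k
  let V : ℤ × Finset ℤ → Set (ℤ → Fin r) := fun p =>
    {c | p.2.card = k ∧ (∀ b ∈ p.2, c b = c p.1) ∧ (∀ b ∈ p.2, c (p.1 + b) = c p.1)}
  have hopen : ∀ p, IsOpen (V p) := by
    intro p
    have e : V p = {c | p.2.card = k} ∩ ((⋂ b ∈ p.2, {c | c b = c p.1}) ∩
        (⋂ b ∈ p.2, {c | c (p.1 + b) = c p.1})) := by
      ext c; simp [V]
    have hb : ∀ x y : ℤ, IsOpen {c : ℤ → Fin r | c x = c y} := by
      intro x y
      have : Continuous fun c : ℤ → Fin r => (c x, c y) := by fun_prop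
      exact (isOpen_discrete {q : Fin r × Fin r | q.1 = q.2}).preimage this
    rw [e]
    exact isOpen_const.inter ((isOpen_biInter_finset fun b _ => hb _ _).inter
      (isOpen_biInter_finset fun b _ => hb _ _))
  have hcov : (Set.univ : Set (ℤ → Fin r)) ⊆ ⋃ p, V p := by
    intro c _
    obtain ⟨C, ⟨i, rfl⟩, s, hs⟩ := Hindman.exists_FS_of_finite_cover (M := ℕ+)
      (Set.range fun i : Fin r => {n : ℕ+ | c ((n : ℕ) : ℤ) = i}) (Set.finite_range _)
      (by intro n _; exact ⟨_, ⟨c ((n : ℕ) : ℤ), rfl⟩, rfl⟩)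
    obtain ⟨B, hB, hk⟩ := (FS_infinite s.tail).exists_subset_card_eq k
    have h0 : c ((s.head : ℕ) : ℤ) = i := hs (Hindman.FS.head s)
    refine Set.mem_iUnion.2 ⟨(((s.head : ℕ) : ℤ), B.image fun n : ℕ+ => ((n : ℕ) : ℤ)), ?_, ?_, ?_⟩
    · rw [← hk]
      apply Finset.card_image_of_injective
      intro x y hxy
      simpa using hxy
    · intro b hb
      obtain ⟨n, hn, rfl⟩ := Finset.mem_image.1 hb
      exact Eq.trans (hs (Hindman.FS.tail s n (hB hn))) h0.symm
    · intro b hb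
      obtain ⟨n, hn, rfl⟩ := Finset.mem_image.1 hb
      have : c (((s.head + n : ℕ+) : ℕ) : ℤ) = i := hs (Hindman.FS.cons s n (hB hn))
      rw [PNat.add_coe, Nat.cast_add] at this
      exact this.trans h0.symm
  obtain ⟨t, ht⟩ := isCompact_univ.elim_finite_subcover V hopen hcov
  refine ⟨t.biUnion fun p => insert p.1 (p.2 ∪ p.2.image (p.1 + ·)), Set.subset_univ _, ?_⟩
  intro c
  obtain ⟨p, hp, hc⟩ := Set.mem_iUnion₂.1 (ht (Set.mem_univ c))
  refine ⟨p.1, ?_, p.2, ?_, hc.1, ?_, hc.2.1, hc.2.2⟩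
  · exact Finset.mem_biUnion.2 ⟨p, hp, by simp⟩
  · intro b hb
    exact Finset.mem_biUnion.2 ⟨p, hp, by simp [hb]⟩
  · intro b hb
    exact Finset.mem_biUnion.2 ⟨p, hp, by simp [hb]⟩

theorem schur_chain (α : Type) [LinearOrder α] [WellFoundedLT α]
    (hα : ∀ x : α, (Set.Iio x).Countable) (e : α → Set ℤ) (A₀ : Set ℤ) (hA₀ : IsSchurSet A₀) :
    ∃ A : α → Set ℤ, ∀ x, IsSchurSet (A x) ∧ A x ⊆ A₀ ∧ (∀ y < x, (A x \ A y).Finite) ∧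
      (A x ⊆ e x ∨ A x ⊆ (e x)ᶜ) := by
  classical
  let P : (x : α) → ((y : α) → y < x → Set ℤ) → Set ℤ → Prop := fun x f S =>
    IsSchurSet S ∧ S ⊆ A₀ ∧ (∀ y (h : y < x), (S \ f y h).Finite) ∧ (S ⊆ e x ∨ S ⊆ (e x)ᶜ)
  let F : (x : α) → ((y : α) → y < x → Set ℤ) → Set ℤ := fun x f =>
    if h : ∃ S, P x f S then h.choose else ∅
  let A : α → Set ℤ := (wellFounded_lt (α := α)).fix F
  refine ⟨A, fun x => ?_⟩
  induction x using WellFoundedLT.induction with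
  | ind x ih =>
    have hex : ∃ S, P x (fun y _ => A y) S := by
      obtain ⟨S, h1, h2, h3⟩ := schur_pseudo A₀ (Set.Iio x) (hα x) A (by
        intro t ht
        rcases t.eq_empty_or_nonempty with rfl | hne
        · exact ⟨A₀, hA₀, subset_rfl, by simp⟩
        · obtain ⟨i1, i2, i3, -⟩ := ih (t.max' hne) (ht (t.max'_mem hne))
          refine ⟨A (t.max' hne), i1, i2, fun i hi => ?_⟩
          rcases (t.le_max' i hi).eq_or_lt with h | h
          · rw [← h]; simp
          · exact i3 i h)
      rcases schur_union (A₁ := S ∩ e x) (A₂ := S ∩ (e x)ᶜ) h1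
        (by intro z hz; by_cases z ∈ e x <;> simp_all) with h | h
      · exact ⟨_, h, Set.inter_subset_left.trans h2, fun y hy => (h3 y hy).subset
          (Set.diff_subset_diff_left Set.inter_subset_left), Or.inl Set.inter_subset_right⟩
      · exact ⟨_, h, Set.inter_subset_left.trans h2, fun y hy => (h3 y hy).subset
          (Set.diff_subset_diff_left Set.inter_subset_left), Or.inr Set.inter_subset_right⟩
    have hAx : A x = hex.choose := by
      have : A x = F x (fun y _ => A y) := WellFounded.fix_eq _ _ _
      rw [this]
      exact dif_pos hex
    have := hex.choose_spec
    rw [← hAx] at this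
    exact this

theorem schur_main (hCH : Cardinal.continuum.{0} = Cardinal.aleph 1) (A₀ : Set ℤ) (hA₀ : IsSchurSet A₀) :
    ∃ u : Ultrafilter ℤ, IsFreeUltrafilter u ∧ IsSchurUltrafilter u ∧ A₀ ∈ u ∧ IsPPoint u := by
  classical
  let α : Type := (Cardinal.aleph 1).ord.ToType
  have hcard : Cardinal.mk α = Cardinal.aleph 1 := Cardinal.mk_ord_toType _
  have hα : ∀ x : α, (Set.Iio x).Countable := fun x => by
    rw [Cardinal.countable_iff_lt_aleph_one]
    exact Cardinal.mk_Iio_toType_ord_lt x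
  have hunc : ¬ (Set.univ : Set α).Countable := by
    rw [Cardinal.countable_iff_lt_aleph_one, Cardinal.mk_univ, hcard]
    exact lt_irrefl _
  have hb : ∀ g : ℕ → α, ∃ x, ∀ n, g n ≤ x := by
    intro g
    by_contra! hcon
    apply hunc
    refine (Set.countable_iUnion fun n => hα (g n)).mono fun x _ => ?_
    obtain ⟨n, hn⟩ := hcon x
    exact Set.mem_iUnion.2 ⟨n, hn⟩
  have hne : Nonempty α := by
    rw [← Cardinal.mk_ne_zero_iff, hcard]
    exact (Cardinal.aleph_pos 1).ne'
  have heq : Cardinal.mk α = Cardinal.mk (Set ℤ) := by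
    rw [hcard, Cardinal.mk_set, Cardinal.mk_int, Cardinal.two_power_aleph0, hCH]
  obtain ⟨e⟩ := Cardinal.eq.1 heq
  obtain ⟨A, hA⟩ := schur_chain α hα e A₀ hA₀
  have hle : ∀ x y, y ≤ x → (A x \ A y).Finite := by
    intro x y h
    rcases h.eq_or_lt with h | h
    · rw [h]; simp
    · exact (hA x).2.2.1 y h
  have htr : ∀ {x y S}, y ≤ x → (A y \ S).Finite → (A x \ S).Finite := by
    intro x y S h hS
    refine ((hle x y h).union hS).subset ?_
    rintro z ⟨h1, h2⟩
    by_cases hz : z ∈ A y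
    · exact Or.inr ⟨hz, h2⟩
    · exact Or.inl ⟨h1, hz⟩
  let f : Filter ℤ :=
    { sets := {S | ∃ x, (A x \ S).Finite}
      univ_sets := ⟨hne.some, by simp⟩
      sets_of_superset := by
        rintro S T ⟨x, hx⟩ hST
        exact ⟨x, hx.subset (Set.diff_subset_diff_right hST)⟩
      inter_sets := by
        rintro S T ⟨x, hx⟩ ⟨y, hy⟩
        refine ⟨max x y, ?_⟩
        rw [Set.diff_inter]
        exact (htr (le_max_left _ _) hx).union (htr (le_max_right _ _) hy) }
  have hf : ∀ S, S ∈ f ↔ ∃ x, (A x \ S).Finite := fun S => Iff.rfl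
  have hschur : ∀ S ∈ f, IsSchurSet S := by
    rintro S ⟨x, hx⟩
    exact schur_ae (hA x).1 hx
  have hult : ∀ S, Sᶜ ∉ f ↔ S ∈ f := by
    intro S
    constructor
    · intro h
      obtain ⟨x, rfl⟩ := e.surjective S
      refine ⟨x, ?_⟩
      rcases (hA x).2.2.2 with h' | h'
      · rw [Set.diff_eq_empty.2 h']; exact Set.finite_empty
      · exact absurd ⟨x, by rw [Set.diff_eq_empty.2 h']; exact Set.finite_empty⟩ h
    · intro h h'
      have := hschur _ (Filter.inter_mem h h')
      rw [Set.inter_compl_self] at this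
      exact schur_not_finite this Set.finite_empty
  have hmem : ∀ S, S ∈ Ultrafilter.ofComplNotMemIff f hult ↔ S ∈ f := fun S => Iff.rfl
  refine ⟨Ultrafilter.ofComplNotMemIff f hult, ?_, ?_, ?_, ?_⟩
  · intro S hS
    exact schur_not_finite (hschur S hS)
  · intro S hS
    obtain ⟨X, hX, h⟩ := hschur S hS 1 1
    obtain ⟨a, ha, B, hB, hc, h1, -⟩ := h fun _ => 0
    obtain ⟨b, rfl⟩ := Finset.card_eq_one.1 hc
    exact ⟨a, hX ha, b, hX (hB (by simp)), hX (h1 b (by simp))⟩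
  · exact ⟨hne.some, by rw [Set.diff_eq_empty.2 (hA _).2.1]; exact Set.finite_empty⟩
  · intro U hU
    choose g hg using fun n => (hf _).1 ((hmem _).1 (hU n))
    obtain ⟨x, hx⟩ := hb g
    exact ⟨A x, ⟨x, by simp⟩, fun n => htr (hx n) (hg n)⟩

/-- Under CH, for every Schur subset `A` of `ℤ` there is a free Schur ultrafilter
`u` on `ℤ` which is a P-point and contains `A`.  In particular, under CH there
exists a free Schur ultrafilter on `ℤ` that is a P-point. -/
theorem exists_schur_ppoint_of_CH (hCH : Cardinal.continuum = Cardinal.aleph 1) :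
    (∀ A : Set ℤ, IsSchurSet A →
      ∃ u : Ultrafilter ℤ, IsFreeUltrafilter u ∧ IsSchurUltrafilter u ∧ A ∈ u ∧ IsPPoint u) ∧
    ∃ u : Ultrafilter ℤ, IsFreeUltrafilter u ∧ IsSchurUltrafilter u ∧ IsPPoint u := by
  have hCH : Cardinal.continuum.{0} = Cardinal.aleph 1 := by
    apply Cardinal.lift_injective
    rw [Cardinal.lift_continuum, Cardinal.lift_aleph, Ordinal.lift_one]
    exact hCH
  refine ⟨schur_main hCH, ?_⟩
  obtain ⟨u, h1, h2, -, h3⟩ := schur_main hCH _ schur_univ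
  exact ⟨u, h1, h2, h3⟩
end

section
/- Let G be a countable commutative group and let u be a free Schur ultrafilter on G. Then u is not selective. -/
/-- An ultrafilter `u` on a countable set `X` is *selective* if for every partition
`{C n : n ∈ ℕ}` of `X` with `C n ∉ u` for all `n`, there exists `U ∈ u` such that
`U ∩ C n` has at most one element for every `n`. -/
def IsSelective {X : Type*} (u : Ultrafilter X) : Prop :=
  ∀ C : ℕ → Set X, (⋃ n, C n) = Set.univ →
    (Pairwise fun m n => Disjoint (C m) (C n)) →
    (∀ n, C n ∉ u) → ∃ U ∈ u, ∀ n, (U ∩ C n).Subsingleton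

/-- Two-colouring such that `x` and `f x` differ whenever `f` lowers the rank. -/
def schurCol {G : Type*} (r : G → ℕ) (f : G → G) (x : G) : Bool :=
  if r (f x) < r x then !(schurCol r f (f x)) else false
termination_by r x

open Classical Pointwise in
/-- Finite exhaustion. -/
noncomputable def schurF {G : Type*} [AddCommGroup G] (g : ℕ → G) : ℕ → Finset G
  | 0 => ∅
  | n + 1 => insert (g n) (schurF g n ∪ ((schurF g n + schurF g n) ∪ (schurF g n - schurF g n)))

theorem schur_rank {G : Type*} [AddCommGroup G] [Countable G] :
    ∃ r : G → ℕ, (∀ n, (r ⁻¹' {n}).Finite) ∧ (∀ x y, r (x + y) ≤ max (r x) (r y) + 1) ∧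
      (∀ x y, r (x - y) ≤ max (r x) (r y) + 1) := by
  classical
  obtain ⟨g, hg⟩ := exists_surjective_nat G
  have hmono : Monotone (schurF g) := by
    refine monotone_nat_of_le_succ fun n x hx => ?_
    simp only [schurF, Finset.mem_insert, Finset.mem_union]
    tauto
  have hex : ∀ x, ∃ n, x ∈ schurF g n := by
    intro x
    obtain ⟨n, rfl⟩ := hg x
    exact ⟨n + 1, by simp [schurF]⟩
  have hmem : ∀ x n, Nat.find (hex x) ≤ n → x ∈ schurF g n := fun x n h =>
    hmono h (Nat.find_spec (hex x))
  refine ⟨fun x => Nat.find (hex x), fun n => ?_, fun x y => ?_, fun x y => ?_⟩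
  · refine (schurF g n).finite_toSet.subset fun x hx => ?_
    exact hmem x n (le_of_eq hx)
  · apply Nat.find_min'
    have := Finset.add_mem_add (hmem x _ (le_max_left _ (Nat.find (hex y))))
      (hmem y _ (le_max_right (Nat.find (hex x)) _))
    simp only [schurF, Finset.mem_insert, Finset.mem_union]
    tauto
  · apply Nat.find_min'
    have := Finset.sub_mem_sub (hmem x _ (le_max_left _ (Nat.find (hex y))))
      (hmem y _ (le_max_right (Nat.find (hex x)) _))
    simp only [schurF, Finset.mem_insert, Finset.mem_union]
    tauto

theorem schur_const {G : Type*} (u : Ultrafilter G) (c : G → Bool) :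
    ∃ b, {x | c x = b} ∈ u := by
  rcases u.em (fun x => c x = true) with h | h
  · exact ⟨true, h⟩
  · exact ⟨false, by filter_upwards [h] with x hx; simpa using hx⟩

/-- A free Schur ultrafilter on a countable commutative group is not selective. -/
theorem free_schur_not_selective {G : Type*} [AddCommGroup G] [Countable G]
    (u : Ultrafilter G) (hfree : IsFreeUltrafilter u) (hschur : IsSchurUltrafilter u) :
    ¬ IsSelective u := by
  intro hsel
  obtain ⟨r, hfin, hadd, hsub⟩ := schur_rank (G := G)
  obtain ⟨U, hU, hUs⟩ := hsel (fun n => r ⁻¹' {n}) (by ext; simp)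
    (by
      intro m n hmn
      refine Set.disjoint_left.2 fun x hx hy => hmn ?_
      exact hx.symm.trans hy)
    (fun n h => hfree _ h (hfin n))
  have hinj : ∀ x ∈ U, ∀ y ∈ U, r x = r y → x = y := fun x hx y hy h =>
    hUs (r y) ⟨hx, h⟩ ⟨hy, rfl⟩
  obtain ⟨p, hp⟩ := schur_const u (fun x => decide (r x % 2 = 0))
  obtain ⟨q, hq⟩ := schur_const u (schurCol r (fun x => x + x))
  have h0 : {(0 : G)}ᶜ ∈ u := by
    rw [Ultrafilter.compl_mem_iff_notMem]
    exact fun h => hfree _ h (Set.finite_singleton _)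
  obtain ⟨a, ⟨haU, hap, haq, ha0⟩, b, ⟨hbU, hbp, hbq, hb0⟩, hcU, hcp, hcq, hc0⟩ :=
    hschur _ (Filter.inter_mem hU (Filter.inter_mem hp (Filter.inter_mem hq h0)))
  have ha0' : a ≠ 0 := ha0
  have hb0' : b ≠ 0 := hb0
  have hpar : ∀ x y : G, decide (r x % 2 = 0) = p → decide (r y % 2 = 0) = p →
      r x % 2 = r y % 2 := by
    intro x y hx hy
    have := hx.trans hy.symm
    rw [decide_eq_decide] at this
    omega
  have pac := hpar a (a + b) hap hcp
  have pab := hpar a b hap hbp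
  have nac : r a ≠ r (a + b) := fun h => hb0' (by simpa using hinj _ haU _ hcU h)
  have nbc : r b ≠ r (a + b) := fun h => ha0' (by simpa using hinj _ hbU _ hcU h)
  have i1 := hadd a b
  by_cases hab : a = b
  · subst hab
    have hlt : r (a + a) < r a := by
      rw [max_self] at i1
      omega
    have h1 : schurCol r (fun x => x + x) a = q := haq
    have h2 : schurCol r (fun x => x + x) (a + a) = q := hcq
    rw [schurCol, if_pos hlt, h2] at h1
    simp at h1
  · have nab : r a ≠ r b := fun h => hab (hinj _ haU _ hbU h)
    have i2 := hsub (a + b) a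
    have i3 := hsub (a + b) b
    rw [add_sub_cancel_left] at i2
    rw [add_sub_cancel_right] at i3
    omega
end

section
/- Let S be a semigroup and let u be an ultrafilter on S. Then u·u = u if and only if for each U ∈ u there exist x ∈ U and V ∈ u such that x·V ⊆ U. -/
attribute [local instance] Ultrafilter.mul

/-- An ultrafilter `u` on a semigroup `S` is idempotent (`u * u = u`, where the
product of ultrafilters is given by `A ∈ u * v ↔ {x | {y | x * y ∈ A} ∈ v} ∈ u`)
if and only if for each `U ∈ u` there exist `x ∈ U` and `V ∈ u` with `x • V ⊆ U`. -/
theorem idempotent_ultrafilter_iff {S : Type*} [Semigroup S] (u : Ultrafilter S) :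
    u * u = u ↔ ∀ U ∈ u, ∃ x ∈ U, ∃ V ∈ u, ∀ y ∈ V, x * y ∈ U := by
  have key : ∀ A : Set S, A ∈ u * u ↔ {x | {y | x * y ∈ A} ∈ u} ∈ u := fun A =>
    Ultrafilter.eventually_mul u u (fun z => z ∈ A)
  constructor
  · intro h U hU
    have h1 : {x | {y | x * y ∈ U} ∈ u} ∈ u := (key U).1 (h.symm ▸ hU)
    obtain ⟨x, hx, hx'⟩ := u.nonempty_of_mem (Filter.inter_mem hU h1)
    exact ⟨x, hx, {y | x * y ∈ U}, hx', fun y hy => hy⟩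
  · intro h
    refine Ultrafilter.coe_le_coe.1 fun U hU => (key U).2 ?_
    by_contra hn
    have hW := Filter.inter_mem hU (Ultrafilter.compl_mem_iff_notMem.2 hn)
    obtain ⟨x, hx, V, hV, hVU⟩ := h _ hW
    exact hx.2 (Filter.mem_of_superset hV fun y hy => (hVU y hy).1)
end

section
/- Let G be a countably infinite group and let u be a free idempotent ultrafilter on G. Then u is not a weak P-point; in fact, u lies in the closure (with respect to the Stone topology on the space of ultrafilters on G) of the countable set {x·u : x ∈ G} \ {u}, all of whose elements are free ultrafilters. -/
attribute [local instance] Ultrafilter.mul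

/-- An ultrafilter `u` on a countable set `X` is a *weak P-point* if `u` is not in the
closure (in the Stone topology) of any countable set of ultrafilters on `X` that
contains no principal ultrafilter and does not contain `u`. -/
def IsWeakPPoint {X : Type*} (u : Ultrafilter X) : Prop :=
  ∀ D : Set (Ultrafilter X), D.Countable → (∀ v ∈ D, ∀ x : X, v ≠ (pure x : Ultrafilter X)) →
    u ∉ D → u ∉ closure D

theorem mem_pure_mul_aux {G : Type*} [Group G] (x : G) (u : Ultrafilter G) (A : Set G) :
    A ∈ (pure x : Ultrafilter G) * u ↔ {y | x * y ∈ A} ∈ u := by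
  have h := Ultrafilter.eventually_mul (pure x : Ultrafilter G) u (fun z => z ∈ A)
  simpa [Filter.Eventually] using h

theorem eq_one_of_pure_mul_aux {G : Type*} [Group G] (x : G) (u : Ultrafilter G)
    (h : (pure x : Ultrafilter G) * u = u) : x = 1 := by
  by_contra hx
  have key : ∀ A : Set G, A ∈ u ↔ {y | x * y ∈ A} ∈ u := fun A => by
    rw [← mem_pure_mul_aux, h]
  obtain ⟨A, hA⟩ := zorn_subset {A : Set G | ∀ a ∈ A, x * a ∉ A} (by
    intro c hc hchain
    refine ⟨⋃₀ c, ?_, fun s hs => Set.subset_sUnion_of_mem hs⟩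
    rintro a ⟨s, hs, has⟩ ⟨t, ht, hat⟩
    rcases hchain.total hs ht with hst | hts
    · exact hc ht a (hst has) hat
    · exact hc hs a has (hts hat))
  have hAp : ∀ a ∈ A, x * a ∉ A := hA.1
  have hcov : ∀ g : G, g ∈ A ∨ x * g ∈ A ∨ x⁻¹ * g ∈ A := by
    intro g
    by_contra! hg
    obtain ⟨h1, h2, h3⟩ := hg
    have hins : insert g A ∈ {A : Set G | ∀ a ∈ A, x * a ∉ A} := by
      rintro a (rfl | ha) (hb | hb)
      · exact hx (by simpa using hb)
      · exact h2 hb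
      · apply h3
        rw [← hb]
        simpa using ha
      · exact hAp a ha hb
    exact h1 (hA.2 hins (Set.subset_insert g A) (Set.mem_insert g A))
  have hnot : A ∉ u := by
    intro hAu
    obtain ⟨y, hy1, hy2⟩ := u.nonempty_of_mem (Filter.inter_mem hAu ((key A).1 hAu))
    exact hAp y hy1 hy2
  have hun : A ∪ ({y | x * y ∈ A} ∪ {y | x⁻¹ * y ∈ A}) ∈ u := by
    refine Filter.univ_mem' ?_
    intro g
    exact hcov g
  rw [Ultrafilter.union_mem_iff, Ultrafilter.union_mem_iff] at hun
  rcases hun with h1 | h1 | h1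
  · exact hnot h1
  · exact hnot ((key A).2 h1)
  · rw [key] at h1
    exact hnot (by simpa using h1)

/-- A free idempotent ultrafilter `u` on a countably infinite group is not a weak
P-point: indeed, `u` lies in the closure of the countable set `{x • u : x ∈ G} \ {u}`,
all of whose elements are free ultrafilters. -/
theorem free_idempotent_not_weakPPoint {G : Type*} [Group G] [Countable G] [Infinite G]
    (u : Ultrafilter G) (hfree : IsFreeUltrafilter u) (hidem : u * u = u) :
    letI C : Set (Ultrafilter G) := {v | ∃ x : G, v = (pure x : Ultrafilter G) * u} \ {u}
    C.Countable ∧ (∀ v ∈ C, IsFreeUltrafilter v) ∧ u ∈ closure C ∧ ¬ IsWeakPPoint u := by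
  have hC : ({v | ∃ x : G, v = (pure x : Ultrafilter G) * u} \ {u}).Countable := by
    refine Set.Countable.mono Set.sdiff_subset ?_
    refine (Set.countable_range (fun x : G => (pure x : Ultrafilter G) * u)).mono ?_
    rintro v ⟨x, rfl⟩
    exact ⟨x, rfl⟩
  have hF : ∀ v ∈ ({v | ∃ x : G, v = (pure x : Ultrafilter G) * u} \ {u}),
      IsFreeUltrafilter v := by
    rintro v ⟨⟨x, rfl⟩, -⟩ A hA hfin
    rw [mem_pure_mul_aux] at hA
    exact hfree _ hA (hfin.preimage (mul_right_injective x).injOn)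
  have hcl : u ∈ closure ({v | ∃ x : G, v = (pure x : Ultrafilter G) * u} \ {u}) := by
    rw [ultrafilterBasis_is_basis.mem_closure_iff]
    rintro _ ⟨A, rfl⟩ hA
    have hA' : A ∈ u * u := by rw [hidem]; exact hA
    have h2 : {x | {y | x * y ∈ A} ∈ u} ∈ u :=
      (Ultrafilter.eventually_mul u u (fun z => z ∈ A)).1 hA'
    have h1 : ({1}ᶜ : Set G) ∈ u := by
      rw [Ultrafilter.compl_mem_iff_notMem]
      exact fun h => hfree _ h (Set.finite_singleton 1)
    obtain ⟨x, hx1, hx2⟩ := u.nonempty_of_mem (Filter.inter_mem h1 h2)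
    exact ⟨(pure x : Ultrafilter G) * u, (mem_pure_mul_aux x u A).2 hx2, ⟨x, rfl⟩,
      fun h => hx1 (eq_one_of_pure_mul_aux x u h)⟩
  refine ⟨hC, hF, hcl, fun hw => hw _ hC ?_ (fun h => h.2 rfl) hcl⟩
  rintro v hv x rfl
  exact hF _ hv {x} (Ultrafilter.mem_pure.2 rfl) (Set.finite_singleton x)
end

section
/- The set of positive integers is a Schur subset of ℤ. Equivalently, for every r, k ∈ ℕ there exists N ∈ ℕ such that for every coloring c : {1, …, N} → {1, …, r} there exist a ∈ {1, …, N} and a k-element subset B ⊆ {1, …, N} with a + B ⊆ {1, …, N} such that c is constant on {a} ∪ B ∪ (a + B). -/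
theorem fs_aux (k : ℕ) : ∀ s : Stream' ℕ+, ∃ B : Finset ℕ+, B.card = k ∧
    ∀ b ∈ B, b ∈ Hindman.FS s := by
  induction k with
  | zero => intro s; exact ⟨∅, by simp⟩
  | succ k ih =>
    intro s
    obtain ⟨B, hB, hs⟩ := ih s.tail
    refine ⟨insert s.head (B.map (addLeftEmbedding s.head)), ?_, ?_⟩
    · rw [Finset.card_insert_of_notMem, Finset.card_map, hB]
      intro h
      obtain ⟨b, _, h⟩ := Finset.mem_map.1 h
      have h2 := congrArg PNat.val h
      have := b.pos
      simp at h2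
    · intro b hb
      rcases Finset.mem_insert.1 hb with rfl | hb
      · exact Hindman.FS.head s
      · obtain ⟨x, hx, rfl⟩ := Finset.mem_map.1 hb
        exact Hindman.FS.cons s x (hs x hx)

theorem inf_aux (r k : ℕ) (c : ℤ → Fin r) : ∃ a : ℤ, 0 < a ∧ ∃ B : Finset ℤ,
    B.card = k ∧ (∀ b ∈ B, 0 < b) ∧ (∀ b ∈ B, c b = c a) ∧ (∀ b ∈ B, c (a + b) = c a) := by
  obtain ⟨t, ⟨i, rfl⟩, s, hs⟩ := Hindman.exists_FS_of_finite_cover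
    (M := ℕ+) (Set.range fun i : Fin r => {n : ℕ+ | c ((n : ℕ) : ℤ) = i}) (Set.finite_range _)
    (by intro n _; simp)
  obtain ⟨B, hB, hb⟩ := fs_aux k s.tail
  have h1 : c ((s.head : ℕ) : ℤ) = i := hs (Hindman.FS.head s)
  refine ⟨((s.head : ℕ) : ℤ), by exact_mod_cast s.head.pos,
    B.map ⟨fun n : ℕ+ => ((n : ℕ) : ℤ), fun x y h => by simpa using h⟩, by simp [hB], ?_, ?_, ?_⟩
  · intro b h
    obtain ⟨n, _, rfl⟩ := Finset.mem_map.1 h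
    exact Int.natCast_pos.2 n.pos
  · intro b h
    obtain ⟨n, hn, rfl⟩ := Finset.mem_map.1 h
    rw [h1]
    exact hs (Hindman.FS.tail s n (hb n hn))
  · intro b h
    obtain ⟨n, hn, rfl⟩ := Finset.mem_map.1 h
    rw [h1]
    have : c (((s.head + n : ℕ+) : ℕ) : ℤ) = i := hs (Hindman.FS.cons s n (hb n hn))
    rw [PNat.add_coe, Nat.cast_add] at this
    exact this

theorem fin_aux (r k : ℕ) : ∃ N : ℕ, ∀ c : ℤ → Fin r,
      ∃ a ∈ Finset.Icc 1 (N : ℤ), ∃ B : Finset ℤ,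
        B ⊆ Finset.Icc 1 (N : ℤ) ∧ B.card = k ∧ (∀ b ∈ B, a + b ∈ Finset.Icc 1 (N : ℤ)) ∧
        (∀ b ∈ B, c b = c a) ∧ (∀ b ∈ B, c (a + b) = c a) := by
  by_contra hcon
  rw [not_exists] at hcon
  have hcon' := fun N => not_forall.1 (hcon N)
  choose C hC using hcon'
  have hlim : ∀ n : ℤ, ∃ v : Fin r, ∀ᶠ N in (Filter.hyperfilter ℕ : Filter ℕ), C N n = v := by
    intro n
    obtain ⟨v, hv⟩ := Ultrafilter.eq_pure_of_finite ((Filter.hyperfilter ℕ).map fun N => C N n)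
    refine ⟨v, ?_⟩
    have : ({v} : Set (Fin r)) ∈ (Filter.hyperfilter ℕ).map fun N => C N n := by
      rw [hv]; exact Set.mem_singleton v
    exact this
  choose c hc using hlim
  obtain ⟨a, ha, B, hB, hpos, h1, h2⟩ := inf_aux r k c
  have hge : ∀ m : ℤ, ∀ᶠ N : ℕ in (Filter.hyperfilter ℕ : Filter ℕ), m ≤ (N : ℤ) := by
    intro m
    apply Filter.Eventually.filter_mono (Nat.hyperfilter_le_atTop)
    exact tendsto_natCast_atTop_atTop.eventually_ge_atTop m
  have e1 : ∀ᶠ N : ℕ in (Filter.hyperfilter ℕ : Filter ℕ), ∀ b ∈ B,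
      C N b = c b ∧ C N (a + b) = c (a + b) ∧ a + b ≤ (N : ℤ) := by
    rw [Filter.eventually_all_finset]
    intro b _
    exact (hc b).and ((hc (a + b)).and (hge (a + b)))
  obtain ⟨N, hN, hNa, hNc⟩ := (e1.and ((hge a).and (hc a))).exists
  apply hC N
  refine ⟨a, Finset.mem_Icc.2 ⟨by lia, hNa⟩, B, ?_, hB, ?_, ?_, ?_⟩
  · intro b hb
    have := hN b hb
    have := hpos b hb
    exact Finset.mem_Icc.2 ⟨by lia, by lia⟩
  · intro b hb
    have := hN b hb
    have := hpos b hb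
    exact Finset.mem_Icc.2 ⟨by lia, by lia⟩
  · intro b hb
    rw [(hN b hb).1, hNc, h1 b hb]
  · intro b hb
    rw [(hN b hb).2.1, hNc, h2 b hb]

/-- The set of positive integers is a Schur subset of `ℤ`: equivalently, for all
`r, k : ℕ` there exists `N : ℕ` such that for every `r`-coloring of `{1, …, N}` there
exist `a ∈ {1, …, N}` and a `k`-element subset `B ⊆ {1, …, N}` with
`a + B ⊆ {1, …, N}` such that the coloring is constant on `{a} ∪ B ∪ (a + B)`. -/
theorem positives_isSchurSet :
    IsSchurSet {n : ℤ | 0 < n} ∧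
    ∀ r k : ℕ, ∃ N : ℕ, ∀ c : ℤ → Fin r,
      ∃ a ∈ Finset.Icc 1 (N : ℤ), ∃ B : Finset ℤ,
        B ⊆ Finset.Icc 1 (N : ℤ) ∧ B.card = k ∧ (∀ b ∈ B, a + b ∈ Finset.Icc 1 (N : ℤ)) ∧
        (∀ b ∈ B, c b = c a) ∧ (∀ b ∈ B, c (a + b) = c a) := by
  refine ⟨fun r k => ?_, fin_aux⟩
  obtain ⟨N, hN⟩ := fin_aux r k
  refine ⟨Finset.Icc 1 (N : ℤ), ?_, hN⟩
  intro x hx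
  have := (Finset.mem_Icc.1 (Finset.mem_coe.1 hx)).1
  show 0 < x
  lia
end

section
/- The set Sch^fin(ℤ) of all free Schur ultrafilters on ℤ which are not infinitary Schur is nonempty, and moreover for every free Schur ultrafilter u on ℤ and every U ∈ u there exists a free Schur ultrafilter v on ℤ with U ∈ v such that v is not infinitary Schur. -/
/-- A set contains a Schur triple. -/
def HasTriple (A : Set ℤ) : Prop := ∃ a ∈ A, ∃ b ∈ A, a + b ∈ A

/-- A set is `r`-Schur if each colouring by `r` colours has a monochromatic triple. -/
def IsRSchur (r : ℕ) (F : Set ℤ) : Prop :=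
  ∀ c : ℤ → Fin r, ∃ a ∈ F, ∃ b ∈ F, a + b ∈ F ∧ c a = c b ∧ c (a + b) = c b

lemma free_of_schur {u : Ultrafilter ℤ} (hu : IsSchurUltrafilter u) {V : Set ℤ} (hV : V ∈ u)
    (h0 : (0 : ℤ) ∉ V) : IsFreeUltrafilter u := by
  intro A hA hfin
  obtain ⟨x, hx, hux⟩ := Ultrafilter.eq_pure_of_finite_mem hfin hA
  subst hux
  obtain ⟨a, ha, b, hb, hab⟩ := hu {x} (by simp)
  simp only [Set.mem_singleton_iff] at ha hb hab
  have : x = 0 := by omega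
  subst this
  exact h0 (by simpa using hV)

/-- A finite colouring has a colour class in an ultrafilter. -/
lemma exists_color {α κ : Type*} [Finite κ] (u : Ultrafilter α) (c : α → κ) :
    ∃ k, {x | c x = k} ∈ u := by
  obtain ⟨k, hk⟩ := Ultrafilter.eq_pure_of_finite (u.map c)
  refine ⟨k, ?_⟩
  have : ({k} : Set κ) ∈ u.map c := by rw [hk]; simp
  exact this

/-- Compactness. -/
lemma exists_finite_rSchur {u : Ultrafilter ℤ} (hu : IsSchurUltrafilter u) {W : Set ℤ}
    (hW : W ∈ u) (r : ℕ) : ∃ n : ℕ, IsRSchur r (W ∩ {x | |x| ≤ (n : ℤ)}) := by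
  by_contra! hcon
  unfold IsRSchur at hcon
  push Not at hcon
  choose c hc using hcon
  have key : ∀ x : ℤ, ∃ k, {n | c n x = k} ∈ Filter.hyperfilter ℕ := fun x =>
    exists_color _ (fun n => c n x)
  choose d hd using key
  obtain ⟨k, hk⟩ := exists_color u d
  obtain ⟨a, ha, b, hb, hab⟩ := hu _ (Filter.inter_mem hW hk)
  have hlarge : ∀ x : ℤ, {n : ℕ | |x| ≤ (n : ℤ)} ∈ Filter.hyperfilter ℕ := by
    intro x
    apply Filter.mem_hyperfilter_of_finite_compl
    refine (Set.finite_lt_nat x.natAbs).subset ?_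
    intro n hn
    simp only [Set.mem_compl_iff, Set.mem_ofPred_eq] at hn ⊢
    rw [Int.abs_eq_natAbs] at hn
    omega
  have hall := Filter.inter_mem (Filter.inter_mem (hd a) (Filter.inter_mem (hd b) (hd (a+b))))
    (Filter.inter_mem (hlarge a) (Filter.inter_mem (hlarge b) (hlarge (a+b))))
  obtain ⟨n, ⟨h1, h2, h3⟩, h4, h5, h6⟩ := (Filter.hyperfilter ℕ).nonempty_of_mem hall
  simp only [Set.mem_ofPred_eq] at h1 h2 h3
  have e1 : d a = k := ha.2
  have e2 : d b = k := hb.2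
  have e3 : d (a + b) = k := hab.2
  exact hc n a ⟨ha.1, h4⟩ b ⟨hb.1, h5⟩ ⟨hab.1, h6⟩ (by rw [h1, h2, e1, e2]) (by rw [h3, h2, e3, e2])

lemma step_s17 {u : Ultrafilter ℤ} (hf : IsFreeUltrafilter u) (hu : IsSchurUltrafilter u) {U : Set ℤ}
    (hU : U ∈ u) (r N : ℕ) : ∃ (F : Set ℤ) (M : ℕ), F ⊆ U ∧ IsRSchur r F ∧ N ≤ M ∧
      (∀ x ∈ F, 2 * (N : ℤ) < |x| ∧ |x| ≤ M) ∧
      (∀ x ∈ F, ∀ y ∈ F, |x - y| ≤ N → x = y) := by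
  obtain ⟨k, hk⟩ := exists_color u (fun x : ℤ => (x : ZMod (N + 1)))
  have hbig : {x : ℤ | 2 * (N : ℤ) < |x|} ∈ u := by
    by_contra h
    rw [← Ultrafilter.compl_mem_iff_notMem] at h
    refine hf _ h ((Set.finite_Icc (-(2 * (N : ℤ))) (2 * N)).subset ?_)
    intro x hx
    simp only [Set.mem_compl_iff, Set.mem_ofPred_eq, not_lt] at hx
    exact abs_le.mp hx
  obtain ⟨n, hn⟩ := exists_finite_rSchur hu (Filter.inter_mem hU (Filter.inter_mem hk hbig)) r
  refine ⟨_, max N n, fun x hx => hx.1.1, hn, le_max_left _ _, ?_, ?_⟩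
  · rintro x ⟨⟨-, -, h⟩, h2⟩
    exact ⟨h, le_trans h2 (by exact_mod_cast le_max_right N n)⟩
  · rintro x ⟨⟨-, hx, -⟩, -⟩ y ⟨⟨-, hy, -⟩, -⟩ hxy
    have h : ((x - y : ℤ) : ZMod (N + 1)) = 0 := by
      simp only [Set.mem_ofPred_eq] at hx hy
      push_cast
      rw [hx, hy, sub_self]
    rw [ZMod.intCast_zmod_eq_zero_iff_dvd] at h
    have := Int.eq_zero_of_abs_lt_dvd h (by push_cast; omega)
    omega

lemma exists_ultra {V : Set ℤ} (hV : ∀ r, IsRSchur r V) :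
    ∃ v : Ultrafilter ℤ, V ∈ v ∧ IsSchurUltrafilter v := by
  have hne : (Filter.generate (insert V {A : Set ℤ | ¬ HasTriple Aᶜ})).NeBot := by
    rw [Filter.generate_neBot_iff]
    intro t ht hfin
    by_contra hemp
    rw [Set.not_nonempty_iff_eq_empty] at hemp
    haveI : Finite t := hfin
    obtain ⟨r, ⟨e⟩⟩ := Finite.exists_equiv_fin (t → Prop)
    obtain ⟨a, ha, b, hb, hab, h1, h2⟩ := hV r (fun x => e (fun A => x ∈ A.1))
    have h1 := e.injective h1
    have h2 := e.injective h2
    have hb' : b ∉ ⋂₀ t := by rw [hemp]; simp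
    simp only [Set.mem_sInter, not_forall] at hb'
    obtain ⟨A, hA, hbA⟩ := hb'
    have h1 := congrFun h1 ⟨A, hA⟩
    have h2 := congrFun h2 ⟨A, hA⟩
    simp only [eq_iff_iff] at h1 h2
    rcases ht hA with rfl | h
    · exact hbA hb
    · exact h ⟨a, fun h => hbA (h1.1 h), b, hbA, fun h => hbA (h2.1 h)⟩
  refine ⟨Ultrafilter.of (Filter.generate (insert V {A : Set ℤ | ¬ HasTriple Aᶜ})), Ultrafilter.of_le _ (Filter.mem_generate_of_mem (Set.mem_insert _ _)), ?_⟩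
  intro A hA
  by_contra hcon
  have : Aᶜ ∈ Ultrafilter.of (Filter.generate (insert V {A : Set ℤ | ¬ HasTriple Aᶜ})) := by
    apply Ultrafilter.of_le
    apply Filter.mem_generate_of_mem
    right
    simpa [HasTriple] using hcon
  exact Ultrafilter.compl_mem_iff_notMem.mp this hA

lemma dense_part (u : Ultrafilter ℤ) (hf : IsFreeUltrafilter u) (hu : IsSchurUltrafilter u)
    (U : Set ℤ) (hU : U ∈ u) :
    ∃ v : Ultrafilter ℤ, IsFreeUltrafilter v ∧ IsSchurUltrafilter v ∧ U ∈ v ∧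
        ¬ IsInfSchurUltrafilter v := by
  choose F M hFU hFS hNM hFb hFs using fun r N => step_s17 hf hu hU r N
  obtain ⟨N, hN⟩ : ∃ N : ℕ → ℕ, ∀ r, N (r + 1) = M r (N r) :=
    ⟨fun r => Nat.rec 0 (fun r n => M r n) r, fun r => rfl⟩
  have hmono : Monotone N := monotone_nat_of_le_succ fun r => by rw [hN]; exact hNM _ _
  let V : Set ℤ := ⋃ r, F r (N r)
  have hb : ∀ r, ∀ x ∈ F r (N r), 2 * (N r : ℤ) < |x| ∧ |x| ≤ N (r + 1) := fun r x hx => by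
    rw [hN]; exact hFb _ _ x hx
  have hVS : ∀ r, IsRSchur r V := by
    intro r c
    obtain ⟨a, ha, b, hb, hab, h⟩ := hFS r (N r) c
    exact ⟨a, Set.mem_iUnion_of_mem r ha, b, Set.mem_iUnion_of_mem r hb,
      Set.mem_iUnion_of_mem r hab, h⟩
  obtain ⟨v, hVv, hv⟩ := exists_ultra hVS
  have h0 : (0 : ℤ) ∉ V := by
    intro h
    obtain ⟨r, hr⟩ := Set.mem_iUnion.mp h
    have := (hb r 0 hr).1
    simp at this
    omega
  refine ⟨v, free_of_schur hv hVv h0, hv,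
    Filter.mem_of_superset hVv (Set.iUnion_subset fun r => hFU _ _), ?_⟩
  intro hinf
  obtain ⟨a, ha, B, hBV, hB, haB⟩ := hinf V hVv
  obtain ⟨t, hat⟩ := Set.mem_iUnion.mp ha
  refine hB ((Set.finite_Icc (-(N (t + 1) : ℤ)) (N (t + 1))).subset ?_)
  intro b hbB
  obtain ⟨r, hbr⟩ := Set.mem_iUnion.mp (hBV hbB)
  obtain ⟨s, hs⟩ := Set.mem_iUnion.mp (haB b hbB)
  have ba := hb t a hat
  have bb := hb r b hbr
  have bs := hb s _ hs
  have hm : ∀ i j, i ≤ j → (N i : ℤ) ≤ N j := fun i j h => by exact_mod_cast hmono h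
  rw [Set.mem_Icc, ← abs_le]
  rcases le_or_gt r t with hrt | hrt
  · exact bb.2.trans (hm _ _ (by omega))
  exfalso
  have h1 := hm (t + 1) r hrt
  have h2 := hm r (r + 1) (by omega)
  rcases lt_trichotomy s r with h | h | h
  · have h3 := hm (s + 1) r h
    have : |b| ≤ |a + b| + |a| := by
      have := abs_sub (a + b) a
      simpa using this
    omega
  · subst h
    have := hFs _ _ _ hs _ hbr (by rw [add_sub_cancel_right]; omega)
    have ha0 : a = 0 := by omega
    exact h0 (ha0 ▸ ha)
  · have h3 := hm (r + 1) s h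
    have := abs_add_le a b
    omega

lemma exists_free_schur : ∃ u : Ultrafilter ℤ, IsFreeUltrafilter u ∧ IsSchurUltrafilter u := by
  letI := Ultrafilter.addSemigroup (M := ℕ+)
  obtain ⟨w, hw⟩ := exists_idempotent_of_compact_t2_of_continuous_add_left
    (M := Ultrafilter ℕ+) Ultrafilter.continuous_add_left
  let u : Ultrafilter ℤ := w.map (fun n : ℕ+ => ((n : ℕ) : ℤ))
  have hu : IsSchurUltrafilter u := by
    intro A hA
    have hA' : ∀ᶠ n : ℕ+ in w, ((n : ℕ) : ℤ) ∈ A := hA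
    have h2 := hA'
    rw [← hw, Ultrafilter.eventually_add] at h2
    obtain ⟨a, ha, h⟩ := (hA'.and h2).exists
    obtain ⟨b, hb, h⟩ := (hA'.and h).exists
    exact ⟨_, ha, _, hb, by simpa using h⟩
  refine ⟨u, free_of_schur hu (V := {x | 0 < x}) ?_ (by simp), hu⟩
  have : ∀ n : ℕ+, ((n : ℕ) : ℤ) ∈ {x : ℤ | 0 < x} := fun n => by simp
  exact Filter.Eventually.of_forall (f := (w : Filter ℕ+)) this

/-- The set of free Schur ultrafilters on `ℤ` which are not infinitary Schur is
nonempty; moreover, for every free Schur ultrafilter `u` on `ℤ` and every `U ∈ u`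
there exists a free Schur ultrafilter `v` containing `U` which is not infinitary
Schur. -/
theorem schFin_nonempty_and_dense :
    (∃ u : Ultrafilter ℤ, IsFreeUltrafilter u ∧ IsSchurUltrafilter u ∧
      ¬ IsInfSchurUltrafilter u) ∧
    ∀ u : Ultrafilter ℤ, IsFreeUltrafilter u → IsSchurUltrafilter u → ∀ U ∈ u,
      ∃ v : Ultrafilter ℤ, IsFreeUltrafilter v ∧ IsSchurUltrafilter v ∧ U ∈ v ∧
        ¬ IsInfSchurUltrafilter v := by
  obtain ⟨u, hf, hu⟩ := exists_free_schur
  refine ⟨?_, dense_part⟩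
  obtain ⟨v, h1, h2, -, h3⟩ := dense_part u hf hu Set.univ Filter.univ_mem
  exact ⟨v, h1, h2, h3⟩
end
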